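/- arXiv:1610.04182 — 8 statements merged into one kernel-verified Lean document; each statement's English description precedes it below -/
import Mathlib

section
/- Derivatives in the tubular neighborhood: for every z ∈ Ω with 0 < d(z) < δ, the distance function d and the nearest-point projection p are differentiable at z and, writing ν = ν(p(z)), κ = κ(p(z)), κ' = κ'(p(z)), one has ∇d(z) = -ν, Dp(z) = (1/(1 - d(z)κ))·(iν)(iν)ᵀ, D(ν∘p)(z) = κ·Dp(z), and ∇(κ∘p)(z) = (κ'/(1 - d(z)κ))·iν. -/
/-!
Consider the tubular coordinates `Φ (t, s) = γ t - s • ν (γ t)`. Since `(ν ∘ γ)' = (κ ∘ γ) γ'` and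
`γ' = i ν`, the differential of `Φ` at `(t, s)` is `(a, b) ↦ a (1 - s κ) iν - b ν`, which is invertible
because `|s κ| < 1`; see `tubeEquiv`.

Fix `z` and write `p z = γ t₀`. For `w` near `z` let `τ w` be a parameter of `p w` within half a period
of `t₀`. Compactness together with the uniqueness of the nearest point of `z` gives `τ w → t₀`
(`tendsto_param`, `eq_of_near`), so `G w = (τ w, d w)` is continuous at `z`, and `Φ (G w) = w` near `z`.
A continuous local right inverse of a map with invertible derivative is differentiable, with the
inverse derivative. This yields `Dτ = (1 - d κ)⁻¹ ⟨iν, ·⟩` and `Dd = ⟨-ν, ·⟩`; the other formulas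
follow by the chain rule from `p = γ ∘ τ`, where `κ ∘ γ` is differentiable by
`differentiable_curvature`.
-/

/- Real inner product on ℂ ≅ ℝ², as a number, as a continuous linear functional,
   and the orthogonal projection matrix e eᵀ onto the line ℝe. -/
noncomputable def ipr (z w : ℂ) : ℝ := z.re * w.re + z.im * w.im

noncomputable def iprCLM (g : ℂ) : ℂ →L[ℝ] ℝ := g.re • Complex.reCLM + g.im • Complex.imCLM

noncomputable def projCLM (e : ℂ) : ℂ →L[ℝ] ℂ := (iprCLM e).smulRight e

lemma unit_sq {n : ℂ} (hn : ‖n‖ = 1) : n.re * n.re + n.im * n.im = 1 := by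
  have h := Complex.normSq_eq_norm_sq n
  rw [hn, Complex.normSq_apply] at h
  linarith

lemma iprCLM_smul_apply (r : ℝ) (g w : ℂ) : iprCLM (r • g) w = r * iprCLM g w := by
  simp [iprCLM]
  ring

/-- The differential of the tubular coordinates `(t, s) ↦ γ t - s • ν (γ t)`: in the orthonormal
frame `(i n, -n)` it is the diagonal matrix with entries `c = 1 - s κ` and `1`. -/
noncomputable def tubeEquiv (n : ℂ) (hn : ‖n‖ = 1) (c : ℝ) (hc : c ≠ 0) : (ℝ × ℝ) ≃L[ℝ] ℂ :=
  ContinuousLinearEquiv.equivOfInverse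
    ((ContinuousLinearMap.fst ℝ ℝ ℝ).smulRight (c • (Complex.I * n))
      + (ContinuousLinearMap.snd ℝ ℝ ℝ).smulRight (-n))
    (((1 / c) • iprCLM (Complex.I * n)).prod (iprCLM (-n)))
    (by
      have h := unit_sq hn
      rintro ⟨a, b⟩
      ext
      · simp [iprCLM]
        field_simp
        linear_combination a * c * h
      · simp [iprCLM]
        linear_combination b * h)
    (by
      have h := unit_sq hn
      intro w
      apply Complex.ext
      · simp [iprCLM]
        field_simp
        linear_combination w.re * h
      · simp [iprCLM]
        field_simp
        linear_combination w.im * h)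

/-- Continuity of the nearest parameter at a point with a unique one: if `γ (τ w)` is a nearest point to `w` for all `w` near `z`
and `z` has the single nearest parameter `t₀` in a compact set containing all `τ w`, then
`τ w → t₀` as `w → z`. -/
lemma tendsto_param {γ : ℝ → ℂ} (hγ : Continuous γ) {d : ℂ → ℝ} {z : ℂ} (hd : ContinuousAt d z)
    {K : Set ℝ} (hK : IsCompact K) {τ : ℂ → ℝ} {t₀ : ℝ}
    (hτK : ∀ᶠ w in nhds z, τ w ∈ K) (hτ : ∀ᶠ w in nhds z, dist w (γ (τ w)) = d w)
    (huniq : ∀ t ∈ K, dist z (γ t) = d z → t = t₀) :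
    Filter.Tendsto τ (nhds z) (nhds t₀) := by
  refine hK.tendsto_nhds_of_unique_mapClusterPt hτK fun t ht hcl => huniq t ht ?_
  have hlim : Filter.Tendsto (fun w => dist z (γ (τ w))) (nhds z) (nhds (d z)) := by
    have h1 : Filter.Tendsto (fun w => d w - dist z w) (nhds z) (nhds (d z)) := by
      have : ContinuousAt (fun w => d w - dist z w) z := by fun_prop
      simpa [ContinuousAt] using this
    have h2 : Filter.Tendsto (fun w => d w + dist z w) (nhds z) (nhds (d z)) := by
      have : ContinuousAt (fun w => d w + dist z w) z := by fun_prop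
      simpa [ContinuousAt] using this
    refine tendsto_of_tendsto_of_tendsto_of_le_of_le' h1 h2 ?_ ?_
    · filter_upwards [hτ] with w hw
      have := dist_triangle_left w (γ (τ w)) z
      linarith
    · filter_upwards [hτ] with w hw
      have := dist_triangle z w (γ (τ w))
      linarith
  have hg : ContinuousAt (fun s => dist z (γ s)) t := by fun_prop
  have hcl2 : MapClusterPt (dist z (γ t)) (nhds z) (fun w => dist z (γ (τ w))) :=
    MapClusterPt.tendsto_comp (f := fun s => dist z (γ s)) hg hcl
  have : ClusterPt (dist z (γ t)) (nhds (d z)) := ClusterPt.mono hcl2 hlim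
  exact eq_of_nhds_neBot this

/-- A `C²` unit normal field `N = -i γ'` with `N' = k γ'` has differentiable coefficient `k`, since
`k = Re (N' · conj γ')`. -/
lemma differentiable_curvature {γ : ℝ → ℂ} (hγC : ContDiff ℝ 3 γ)
    (hγunit : ∀ t, ‖deriv γ t‖ = 1) {k : ℝ → ℝ}
    (hk : ∀ t, deriv (fun s => -Complex.I * deriv γ s) t = (k t : ℂ) * deriv γ t) :
    Differentiable ℝ k := by
  have h1 : ContDiff ℝ 2 (deriv γ) := ContDiff.deriv' (by exact_mod_cast hγC)
  have h2 : ContDiff ℝ 1 (deriv (fun s => -Complex.I * deriv γ s)) :=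
    ContDiff.deriv' (show ContDiff ℝ 2 _ from contDiff_const.mul h1)
  have hN := h2.differentiable (by norm_num)
  have hT := h1.differentiable (by norm_num)
  have hform : k = fun t => (deriv (fun s => -Complex.I * deriv γ s) t).re * (deriv γ t).re
      + (deriv (fun s => -Complex.I * deriv γ s) t).im * (deriv γ t).im := by
    funext t
    rw [hk t]
    have := unit_sq (hγunit t)
    simp
    linear_combination -k t * this
  rw [hform]
  have hre : ∀ f : ℝ → ℂ, Differentiable ℝ f → Differentiable ℝ (fun t => (f t).re) :=
    fun f hf => Complex.reCLM.differentiable.comp hf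
  have him : ∀ f : ℝ → ℂ, Differentiable ℝ f → Differentiable ℝ (fun t => (f t).im) :=
    fun f hf => Complex.imCLM.differentiable.comp hf
  exact ((hre _ hN).mul (hre _ hT)).add ((him _ hN).mul (him _ hT))

/-- A periodic curve that is injective on one period does not return to `γ t₀` within half a period
of `t₀`, endpoints included. -/
lemma eq_of_near {L : ℝ} (hL : 0 < L) {γ : ℝ → ℂ} (hγper : Function.Periodic γ L)
    (hγinj : Set.InjOn γ (Set.Ico 0 L)) {t t₀ : ℝ}
    (ht : t ∈ Set.Icc (t₀ - L / 2) (t₀ + L / 2)) (h : γ t = γ t₀) : t = t₀ := by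
  obtain ⟨n, hn, -⟩ := existsUnique_add_zsmul_mem_Ico hL t 0
  obtain ⟨m, hm, -⟩ := existsUnique_add_zsmul_mem_Ico hL t₀ 0
  rw [zero_add] at hn hm
  have heq : t + n • L = t₀ + m • L := by
    apply hγinj hn hm
    rw [hγper.zsmul n t, hγper.zsmul m t₀, h]
  simp only [zsmul_eq_mul] at heq
  have hdiff : t - t₀ = ((m - n : ℤ) : ℝ) * L := by push_cast; linarith
  have hlt : ((m - n : ℤ) : ℝ) < 1 := by nlinarith [ht.1, ht.2]
  have hgt : (-1 : ℝ) < ((m - n : ℤ) : ℝ) := by nlinarith [ht.1, ht.2]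
  have h0 : m - n = 0 := by
    have h1 : m - n < 1 := by exact_mod_cast hlt
    have h2 : -1 < m - n := by exact_mod_cast hgt
    omega
  rw [h0] at hdiff
  simp at hdiff
  linarith

/-- Derivatives of the distance `d`, the nearest point projection `p`,
the normal `ν ∘ p` and the curvature `κ ∘ p` in the tubular neighborhood of `Γ`. -/
theorem derivatives_in_tubular_neighborhood
    -- the C³ closed boundary curve Γ, parametrized by arc-length
    (L : ℝ) (hL : 0 < L) (γ : ℝ → ℂ)
    (hγC : ContDiff ℝ 3 γ) (hγper : Function.Periodic γ L)
    (hγunit : ∀ t, ‖deriv γ t‖ = 1) (hγinj : Set.InjOn γ (Set.Ico 0 L))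
    (Γset : Set ℂ) (hΓ : Γset = Set.range γ)
    -- exterior unit normal ν, curvature κ and its derivative κ' along Γ
    (ν : ℂ → ℂ) (hν : ∀ t, ν (γ t) = -Complex.I * deriv γ t)
    (κ : ℂ → ℝ) (hκ : ∀ t, deriv (fun s => ν (γ s)) t = (κ (γ t) : ℂ) * deriv γ t)
    (κ' : ℂ → ℝ) (hκ' : ∀ t, deriv (fun s => κ (γ s)) t = κ' (γ t))
    -- the domain Ω, with Γ a connected component of its boundary
    (Ω : Set ℂ) (hΩopen : IsOpen Ω) (hΩconn : IsConnected Ω)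
    (hΓfr : Γset ⊆ frontier Ω)
    (hΓcomp : ∀ q ∈ Γset, connectedComponentIn (frontier Ω) q = Γset)
    -- the distance to Γ and the tubular neighborhood radius δ
    (d : ℂ → ℝ) (hd : ∀ z, d z = Metric.infDist z Γset)
    (δ : ℝ) (hδ : 0 < δ) (hκδ : ∀ q ∈ Γset, |κ q| < 1/δ)
    -- the nearest point projection p on Ω_δ, unique nearest points
    (p : ℂ → ℂ)
    (hp : ∀ z ∈ Ω, d z ≤ δ →
      p z ∈ Γset ∧ dist z (p z) = d z ∧ ∀ q ∈ Γset, dist z q = d z → q = p z)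
    -- ν points out of Ω: z = p(z) - d(z)·ν(p(z)) on Ω_δ
    (hin : ∀ z ∈ Ω, d z ≤ δ → z = p z - (d z : ℝ) • ν (p z)) :
    ∀ z ∈ Ω, 0 < d z → d z < δ →
      -- ∇d(z) = -ν
      HasFDerivAt d (iprCLM (-(ν (p z)))) z ∧
      -- Dp(z) = (1/(1 - dκ)) (iν)(iν)ᵀ
      HasFDerivAt p ((1 / (1 - d z * κ (p z))) • projCLM (Complex.I * ν (p z))) z ∧
      -- D(ν∘p)(z) = κ · Dp(z)
      HasFDerivAt (fun w => ν (p w))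
        (κ (p z) • ((1 / (1 - d z * κ (p z))) • projCLM (Complex.I * ν (p z)))) z ∧
      -- ∇(κ∘p)(z) = (κ'/(1 - dκ)) iν
      HasFDerivAt (fun w => κ (p w))
        (iprCLM ((κ' (p z) / (1 - d z * κ (p z))) • (Complex.I * ν (p z)))) z := by
  intro z hz hd0 hdδ
  subst hΓ
  have hdcont : Continuous d := by
    have : d = fun z => Metric.infDist z (Set.range γ) := funext hd
    rw [this]
    exact Metric.continuous_infDist_pt _
  have hγd : Differentiable ℝ γ := hγC.differentiable (by norm_num)
  have hγ' : Differentiable ℝ (deriv γ) :=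
    (ContDiff.deriv' (n := 2) (by exact_mod_cast hγC)).differentiable (by norm_num)
  have hνγ : (fun s => ν (γ s)) = fun s => -Complex.I * deriv γ s := funext hν
  have hνder : ∀ t, HasDerivAt (fun s => ν (γ s)) ((κ (γ t) : ℂ) * deriv γ t) t := fun t => by
    have hdiff : DifferentiableAt ℝ (fun s => ν (γ s)) t := by
      rw [hνγ]
      exact (hγ' t).const_mul _
    simpa only [hκ t] using hdiff.hasDerivAt
  have hκdiff : Differentiable ℝ (fun s => κ (γ s)) :=
    differentiable_curvature hγC hγunit (by intro t; rw [← hνγ]; exact hκ t)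
  have hκder : ∀ t, HasDerivAt (fun s => κ (γ s)) (κ' (γ t)) t := fun t => by
    simpa only [hκ' t] using (hκdiff t).hasDerivAt
  -- points near `z` lie in the tubular neighbourhood
  have hnear : ∀ᶠ w in nhds z, w ∈ Ω ∧ d w ≤ δ :=
    (hΩopen.eventually_mem hz).and
      ((hdcont.continuousAt.eventually_lt continuousAt_const hdδ).mono fun _ h => h.le)
  obtain ⟨t₀, ht₀⟩ := (hp z hz hdδ.le).1
  -- a parameter of the nearest point, normalized to the period centred at `t₀`
  have hex : ∀ w, ∃ t ∈ Set.Icc (t₀ - L / 2) (t₀ + L / 2), w ∈ Ω → d w ≤ δ → γ t = p w := by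
    intro w
    by_cases hw : w ∈ Ω ∧ d w ≤ δ
    · obtain ⟨s, hs⟩ := (hp w hw.1 hw.2).1
      obtain ⟨t, ht, hst⟩ := hγper.exists_mem_Ico hL s (t₀ - L / 2)
      exact ⟨t, ⟨ht.1, by linarith [ht.2]⟩, fun _ _ => by rw [← hst, hs]⟩
    · exact ⟨t₀, ⟨by linarith, by linarith⟩, fun h1 h2 => absurd ⟨h1, h2⟩ hw⟩
  choose τ hτK hτp using hex
  have hτz : τ z = t₀ := eq_of_near hL hγper hγinj (hτK z) (by rw [hτp z hz hdδ.le, ht₀])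
  have hτlim : Filter.Tendsto τ (nhds z) (nhds t₀) := by
    refine tendsto_param hγC.continuous hdcont.continuousAt isCompact_Icc
      (Filter.Eventually.of_forall hτK) ?_ ?_
    · filter_upwards [hnear] with w hw
      rw [hτp w hw.1 hw.2]
      exact (hp w hw.1 hw.2).2.1
    · intro t ht htz
      refine eq_of_near hL hγper hγinj ht ?_
      rw [ht₀]
      exact (hp z hz hdδ.le).2.2 _ ⟨t, rfl⟩ htz
  have hpγ : p =ᶠ[nhds z] fun w => γ (τ w) := by
    filter_upwards [hnear] with w hw
    exact (hτp w hw.1 hw.2).symm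
  have hn : ‖ν (p z)‖ = 1 := by rw [← ht₀, hν, norm_mul, hγunit]; simp
  have htan : deriv γ t₀ = Complex.I * ν (p z) := by
    rw [← ht₀, hν, ← mul_assoc, mul_neg, Complex.I_mul_I]
    simp
  have hc : 1 - d z * κ (p z) ≠ 0 := by
    have hk := hκδ (p z) (hp z hz hdδ.le).1
    rw [lt_div_iff₀ hδ] at hk
    have h1 : d z * κ (p z) ≤ |κ (p z)| * δ := by
      rw [mul_comm]
      exact mul_le_mul (le_abs_self _) hdδ.le hd0.le (abs_nonneg _)
    intro h
    linarith
  -- `G` is a local right inverse of the tubular coordinates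
  let Φ : ℝ × ℝ → ℂ := fun x => γ x.1 - x.2 • ν (γ x.1)
  let G : ℂ → ℝ × ℝ := fun w => (τ w, d w)
  have hGcont : ContinuousAt G z := by
    refine ContinuousAt.prodMk ?_ hdcont.continuousAt
    rw [ContinuousAt, hτz]
    exact hτlim
  have hΦ : HasFDerivAt Φ (tubeEquiv (ν (p z)) hn _ hc : (ℝ × ℝ) →L[ℝ] ℂ) (G z) := by
    have hGz : G z = (t₀, d z) := by simp [G, hτz]
    rw [hGz]
    have h1 : HasFDerivAt (fun x : ℝ × ℝ => γ x.1) _ (t₀, d z) :=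
      (hγd t₀).hasDerivAt.hasFDerivAt.comp (t₀, d z) (f := Prod.fst) hasFDerivAt_fst
    have h2 : HasFDerivAt (fun x : ℝ × ℝ => ν (γ x.1)) _ (t₀, d z) :=
      (hνder t₀).hasFDerivAt.comp (t₀, d z) (f := Prod.fst) hasFDerivAt_fst
    have h3 : HasFDerivAt (fun x : ℝ × ℝ => x.2)
        (ContinuousLinearMap.snd ℝ ℝ ℝ) (t₀, d z) := hasFDerivAt_snd
    refine (h1.sub (h3.smul h2)).congr_fderiv ?_
    ext
    · simp [tubeEquiv, htan, ht₀]
      ring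
    · simp [tubeEquiv, ht₀]
  have hG : HasFDerivAt G ((tubeEquiv (ν (p z)) hn _ hc).symm : ℂ →L[ℝ] ℝ × ℝ) z := by
    refine HasFDerivAt.of_local_left_inverse hGcont hΦ ?_
    filter_upwards [hnear] with w hw
    simp only [Φ, G, hτp w hw.1 hw.2]
    exact (hin w hw.1 hw.2).symm
  have hτder : HasFDerivAt τ ((1 / (1 - d z * κ (p z))) • iprCLM (Complex.I * ν (p z))) z :=
    hG.fst
  have hdder : HasFDerivAt d (iprCLM (-(ν (p z)))) z := hG.snd
  refine ⟨hdder, ?_, ?_, ?_⟩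
  · have h : HasFDerivAt (fun w => γ (τ w)) _ z :=
      HasFDerivAt.comp z (g := γ) (hγd (τ z)).hasDerivAt.hasFDerivAt hτder
    refine (h.congr_of_eventuallyEq hpγ).congr_fderiv ?_
    ext w
    simp [projCLM, hτz, htan]
  · have h : HasFDerivAt (fun w => ν (γ (τ w))) _ z :=
      HasFDerivAt.comp z (g := fun s => ν (γ s)) (hνder (τ z)).hasFDerivAt hτder
    refine (h.congr_of_eventuallyEq (hpγ.fun_comp ν)).congr_fderiv ?_
    ext w
    simp [projCLM, hτz, htan, ht₀]
    ring
  · have h : HasFDerivAt (fun w => κ (γ (τ w))) _ z :=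
      HasFDerivAt.comp z (g := fun s => κ (γ s)) (hκder (τ z)).hasFDerivAt hτder
    refine (h.congr_of_eventuallyEq (hpγ.fun_comp κ)).congr_fderiv ?_
    ext w
    rw [iprCLM_smul_apply]
    simp [hτz, ht₀]
    ring
end

section
/- Solutions of the limit system are periodic: let u : ℝ → ℂ be a C¹ solution of u'(t) = (1 - d(u(t))·κ(p(u(t))))·(δ/d(u(t)))·i·ν(p(u(t))) with 0 < d(u(t)) ≤ δ for all t. Then the distance d(u(t)) is constant, equal to some ε ∈ (0, δ], and u is periodic with minimal period ε·L/δ. -/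
/-!
Write `ε(t) = d (u t)`. For fixed `t`, the function `s ↦ |u s - p (u t)|` lies above `ε(s)`, agrees
with it at `s = t`, and has derivative zero there, because the velocity is tangent to `Γ` at
`p (u t)` while `u t - p (u t)` is normal. A continuous function touched from above in this way at
every point is constant (`eq_of_touching_above`), so `ε` is constant; no differentiability of `d`
or `p` is needed.

The nearest point `p (u t)` corresponds to a unique point of the circle `ℝ / Lℤ`, which depends
continuously on `t` by compactness and uniqueness (`continuous_of_closed_graph`), and hence lifts
to a continuous `θ : ℝ → ℝ` with `u = F ∘ θ` for `F = γ - ε ν ∘ γ`. Since `F' = (1 - ε κ) γ'` does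
not vanish, the chain rule can be inverted (`hasDerivAt_of_comp`) and the equation for `u` gives
`θ' = δ / ε`. So `θ` is affine, and the periods of `u` are exactly those of
`t ↦ γ (θ 0 + δ t / ε)`.
-/

open Set Filter Topology

/-- At each point the upper right slope of `f` is bounded by that of the touching function `g`,
hence is nonpositive, so `f` is antitone. -/
lemma le_of_touching_above {f : ℝ → ℝ} (hf : Continuous f)
    (h : ∀ t, ∃ g : ℝ → ℝ, HasDerivAt g 0 t ∧ g t = f t ∧ ∀ s, f s ≤ g s)
    {a b : ℝ} (hab : a ≤ b) : f b ≤ f a := by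
  refine image_le_of_liminf_slope_right_le_deriv_boundary (f := f) (a := a) (b := b)
    (B := fun _ => f a) (B' := fun _ => 0) hf.continuousOn le_rfl continuousOn_const
    (fun x _ => hasDerivWithinAt_const _ _ _) ?_ ⟨hab, le_rfl⟩
  intro x _ r hr
  obtain ⟨g, hg, hgx, hfg⟩ := h x
  have h1 : ∀ᶠ z in 𝓝[>] x, slope g x z < r :=
    ((hasDerivWithinAt_iff_tendsto_slope' (self_notMem_Ioi)).1
      hg.hasDerivWithinAt).eventually_lt_const hr
  refine Eventually.frequently ?_
  filter_upwards [h1, self_mem_nhdsWithin] with z hz hxz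
  refine lt_of_le_of_lt ?_ hz
  rw [slope_def_field, slope_def_field, hgx]
  have : 0 < z - x := sub_pos.2 hxz
  gcongr
  exact hfg z

/-- The hypothesis is invariant under time reversal, so `f` is both antitone and monotone. -/
lemma eq_of_touching_above {f : ℝ → ℝ} (hf : Continuous f)
    (h : ∀ t, ∃ g : ℝ → ℝ, HasDerivAt g 0 t ∧ g t = f t ∧ ∀ s, f s ≤ g s)
    (a b : ℝ) : f a = f b := by
  have hneg : ∀ t, ∃ g : ℝ → ℝ, HasDerivAt g 0 t ∧ g t = f (-t) ∧ ∀ s, f (-s) ≤ g s := by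
    intro t
    obtain ⟨g, hg, hgt, hfg⟩ := h (-t)
    refine ⟨fun s => g (-s), ?_, hgt, fun s => hfg (-s)⟩
    have := HasDerivAt.comp t hg (hasDerivAt_neg t)
    simpa [Function.comp_def] using this
  have key : ∀ {x y : ℝ}, x ≤ y → f x = f y := by
    intro x y hxy
    refine le_antisymm ?_ (le_of_touching_above hf h hxy)
    have := le_of_touching_above (f := fun s => f (-s)) (hf.comp continuous_neg) hneg
      (neg_le_neg hxy)
    simpa using this
  rcases le_total a b with hab | hab
  · exact key hab
  · exact (key hab).symm

/-- Inverse form of the chain rule: the slope of `θ` is the slope of `G ∘ θ` divided by the slope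
of `G`, which stays away from zero near `θ t`. -/
lemma hasDerivAt_of_comp {G θ : ℝ → ℝ} {m c t : ℝ} (hm : m ≠ 0)
    (hG : HasDerivAt G m (θ t)) (hθ : ContinuousAt θ t)
    (hc : HasDerivAt (fun s => G (θ s)) (m * c) t) : HasDerivAt θ c t := by
  rw [hasDerivAt_iff_tendsto_slope] at hc ⊢
  have hd : Tendsto (fun s => dslope G (θ t) (θ s)) (𝓝[≠] t) (𝓝 m) := by
    have h1 : ContinuousAt (dslope G (θ t)) (θ t) :=
      continuousAt_dslope_same.2 hG.differentiableAt
    have h2 := (ContinuousAt.comp (f := θ) h1 hθ).tendsto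
    simp only [Function.comp_def, dslope_same, hG.deriv] at h2
    exact h2.mono_left nhdsWithin_le_nhds
  have h3 := hc.div hd hm
  rw [mul_div_cancel_left₀ _ hm] at h3
  refine h3.congr' ?_
  filter_upwards [hd.eventually_ne hm] with s hs
  have h4 := sub_smul_dslope G (θ t) (θ s)
  rw [smul_eq_mul] at h4
  simp only [Pi.div_apply, slope_def_field, ← h4]
  field_simp

/-- Closed graph theorem for maps into a compact space: the preimage of a closed set is the
projection along the compact factor of a closed subset of the graph. -/
lemma continuous_of_closed_graph {X K : Type*} [TopologicalSpace X] [TopologicalSpace K]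
    [CompactSpace K] (c : X → K) (hc : IsClosed {x : X × K | c x.1 = x.2}) : Continuous c := by
  rw [continuous_iff_isClosed]
  intro s hs
  have h1 : c ⁻¹' s = Prod.fst '' ({x : X × K | c x.1 = x.2} ∩ Prod.snd ⁻¹' s) := by
    ext x
    simp
  rw [h1]
  exact isClosedMap_fst_of_compactSpace _ (hc.inter (hs.preimage continuous_snd))

lemma exists_continuous_lift {L : ℝ} [Fact (0 < L)] (c : ℝ → AddCircle L) (hc : Continuous c) :
    ∃ θ : ℝ → ℝ, Continuous θ ∧ ∀ t, (θ t : AddCircle L) = c t := by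
  obtain ⟨e, he⟩ := QuotientAddGroup.mk_surjective (c 0)
  obtain ⟨F, ⟨-, hF⟩, -⟩ := (AddCircle.isCoveringMap_coe L).existsUnique_continuousMap_lifts
    ⟨c, hc⟩ 0 e he
  exact ⟨F, F.continuous, fun t => congrFun hF t⟩



/-- Any C¹ solution of the limit system
`u' = (1 - d(u)κ(p(u)))·(δ/d(u))·i·ν(p(u))` staying in `Ω_δ` has constant distance
`ε ∈ (0,δ]` to `Γ` and is periodic with minimal period `εL/δ`. -/
theorem limit_system_solutions_periodic
    (L : ℝ) (hL : 0 < L) (γ : ℝ → ℂ)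
    (hγC : ContDiff ℝ 3 γ) (hγper : Function.Periodic γ L)
    (hγunit : ∀ t, ‖deriv γ t‖ = 1) (hγinj : Set.InjOn γ (Set.Ico 0 L))
    (Γset : Set ℂ) (hΓ : Γset = Set.range γ)
    (ν : ℂ → ℂ) (hν : ∀ t, ν (γ t) = -Complex.I * deriv γ t)
    (κ : ℂ → ℝ) (hκ : ∀ t, deriv (fun s => ν (γ s)) t = (κ (γ t) : ℂ) * deriv γ t)
    (Ω : Set ℂ) (hΩopen : IsOpen Ω) (hΩconn : IsConnected Ω)
    (hΓfr : Γset ⊆ frontier Ω)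
    (hΓcomp : ∀ q ∈ Γset, connectedComponentIn (frontier Ω) q = Γset)
    (d : ℂ → ℝ) (hd : ∀ z, d z = Metric.infDist z Γset)
    (δ : ℝ) (hδ : 0 < δ) (hκδ : ∀ q ∈ Γset, |κ q| < 1/δ)
    (p : ℂ → ℂ)
    (hp : ∀ z ∈ Ω, d z ≤ δ →
      p z ∈ Γset ∧ dist z (p z) = d z ∧ ∀ q ∈ Γset, dist z q = d z → q = p z)
    (hin : ∀ z ∈ Ω, d z ≤ δ → z = p z - (d z : ℝ) • ν (p z))
    -- the solution u of the limit system
    (u : ℝ → ℂ) (huC : ContDiff ℝ 1 u) (huΩ : ∀ t, u t ∈ Ω)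
    (hud : ∀ t, 0 < d (u t) ∧ d (u t) ≤ δ)
    (huode : ∀ t, deriv u t =
      ((1 - d (u t) * κ (p (u t))) * (δ / d (u t))) • (Complex.I * ν (p (u t)))) :
    ∃ ε : ℝ, 0 < ε ∧ ε ≤ δ ∧ (∀ t, d (u t) = ε) ∧
      Function.Periodic u (ε * L / δ) ∧
      ∀ T, 0 < T → Function.Periodic u T → ε * L / δ ≤ T := by
  have : Fact (0 < L) := ⟨hL⟩
  have hud' : ∀ t, d (u t) ≤ δ := fun t => (hud t).2
  have hu : ∀ t, HasDerivAt u (deriv u t) t := fun t =>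
    (huC.differentiable (by norm_num) t).hasDerivAt
  have hγd : ∀ t, HasDerivAt γ (deriv γ t) t := fun t =>
    (hγC.differentiable (by norm_num) t).hasDerivAt
  have hνd : ∀ t, HasDerivAt (fun s => ν (γ s)) ((κ (γ t) : ℂ) * deriv γ t) t := by
    intro t
    rw [← hκ t]
    refine DifferentiableAt.hasDerivAt ?_
    simp only [hν]
    have : ContDiff ℝ 1 (deriv γ) := by
      have h3 : ContDiff ℝ (2 + 1) γ := by
        convert hγC using 1
        norm_num
      exact (contDiff_succ_iff_deriv.1 h3).2.2.of_le (by norm_num)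
    exact ((this.differentiable (by norm_num)) t).const_mul _
  have hpar : ∀ t, ∃ x, γ x = p (u t) := fun t => by
    have := (hp _ (huΩ t) (hud' t)).1
    rwa [hΓ] at this
  -- The circle of radius `d (u t)` about `p (u t)` is tangent to the velocity, so
  -- `s ↦ dist (u s) (p (u t))` touches `d ∘ u` from above at `t` with derivative zero.
  have hconst : ∀ a b, d (u a) = d (u b) := by
    refine eq_of_touching_above (f := fun t => d (u t)) ?_ ?_
    · simp only [hd]
      exact (Metric.continuous_infDist_pt _).comp huC.continuous
    · intro t
      obtain ⟨hpΓ, hpd, -⟩ := hp _ (huΩ t) (hud' t)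
      refine ⟨fun s => ‖u s - p (u t)‖, ?_, ?_, ?_⟩
      · have hne : u t - p (u t) ≠ 0 := by
          rw [← norm_pos_iff, ← dist_eq_norm, hpd]
          exact (hud t).1
        have h1 : HasDerivAt (fun s => ‖u s - p (u t)‖ ^ 2) 0 t := by
          have := ((hu t).sub_const (p (u t))).norm_sq
          convert this using 1
          have h2 : u t - p (u t) = - (d (u t) • ν (p (u t))) := by
            have h3 := hin _ (huΩ t) (hud' t)
            linear_combination h3
          rw [h2, huode, Complex.inner]
          simp
          ring
        have h2 := h1.sqrt (pow_ne_zero 2 (norm_ne_zero_iff.2 hne))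
        simpa using h2
      · simpa [dist_eq_norm] using hpd
      · intro s
        simp only [hd]
        rw [← dist_eq_norm]
        exact Metric.infDist_le_dist_of_mem hpΓ
  set ε := d (u 0) with hε
  have hdε : ∀ t, d (u t) = ε := fun t => hconst t 0
  have hε0 : 0 < ε := (hud 0).1
  have hεδ : ε ≤ δ := hud' 0
  -- Angular coordinate `c t` of the nearest point on the circle of length `L`.
  have hcont : Continuous (hγper.lift : AddCircle L → ℂ) :=
    continuous_coinduced_dom.2 hγC.continuous
  have hinj : Function.Injective (hγper.lift : AddCircle L → ℂ) := by
    intro x y hxy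
    obtain ⟨a, ha, rfl⟩ := AddCircle.eq_coe_Ico x
    obtain ⟨b, hb, rfl⟩ := AddCircle.eq_coe_Ico y
    have : γ a = γ b := hxy
    rw [hγinj ha hb this]
  choose x hx using hpar
  set c : ℝ → AddCircle L := fun t => (x t : AddCircle L) with hc
  have hγc : ∀ t, hγper.lift (c t) = p (u t) := hx
  have hcc : Continuous c := by
    refine continuous_of_closed_graph c ?_
    have : {z : ℝ × AddCircle L | c z.1 = z.2} = {z | dist (u z.1) (hγper.lift z.2) = ε} := by
      ext ⟨t, y⟩
      obtain ⟨-, hpd, hpu⟩ := hp _ (huΩ t) (hud' t)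
      simp only [mem_ofPred_eq]
      constructor
      · rintro rfl
        rw [hγc, hpd, hdε]
      · intro h
        apply hinj
        rw [hγc]
        refine (hpu _ ?_ (h.trans (hdε t).symm)).symm
        rw [hΓ]
        obtain ⟨b, rfl⟩ := QuotientAddGroup.mk_surjective y
        exact ⟨b, rfl⟩
    rw [this]
    exact isClosed_eq ((huC.continuous.comp continuous_fst).dist (hcont.comp continuous_snd))
      continuous_const
  obtain ⟨θ, hθc, hθ⟩ := exists_continuous_lift c hcc
  have hγθ : ∀ t, γ (θ t) = p (u t) := fun t => by
    rw [← hγc, ← hθ]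
    rfl
  have huθ : ∀ t, u t = γ (θ t) - ε • ν (γ (θ t)) := fun t => by
    rw [hγθ, ← hdε t]
    exact hin _ (huΩ t) (hud' t)
  -- Project `u = (γ - ε ν ∘ γ) ∘ θ` onto the tangent direction at `γ (θ t)`.
  have hθd : ∀ t, HasDerivAt θ (δ / ε) t := by
    intro t
    set τ := deriv γ (θ t) with hτ
    have hττ : inner ℝ τ τ = (1 : ℝ) := by
      rw [real_inner_self_eq_norm_sq, hγunit, one_pow]
    have hm : (1 - ε * κ (γ (θ t))) ≠ 0 := by
      have h1 := hκδ (γ (θ t)) (by rw [hΓ]; exact ⟨_, rfl⟩)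
      have h2 : κ (γ (θ t)) < 1 / δ := lt_of_le_of_lt (le_abs_self _) h1
      have h3 : ε * κ (γ (θ t)) < 1 := by
        calc ε * κ (γ (θ t)) < ε * (1 / δ) := by gcongr
          _ ≤ δ * (1 / δ) := by gcongr
          _ = 1 := by field_simp
      linarith
    refine hasDerivAt_of_comp (G := fun y => inner ℝ τ (γ y - ε • ν (γ y))) hm ?_
      hθc.continuousAt ?_
    · have h1 := (hγd (θ t)).sub ((hνd (θ t)).const_smul ε)
      have h2 := (hasDerivAt_const (θ t) τ).inner ℝ h1
      refine h2.congr_deriv ?_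
      rw [← hτ]
      have h3 : τ - ε • ((κ (γ (θ t)) : ℂ) * τ) = (1 - ε * κ (γ (θ t))) • τ := by
        simp only [Complex.real_smul]
        push_cast
        ring
      rw [h3, inner_smul_right, hττ]
      simp
    · simp only [← huθ]
      have h2 := (hasDerivAt_const t τ).inner ℝ (hu t)
      refine h2.congr_deriv ?_
      have h3 : Complex.I * ν (p (u t)) = τ := by
        rw [← hγθ, hν, ← mul_assoc]
        simp [hτ]
      rw [huode, h3, inner_smul_right, hττ, hdε, hγθ]
      simp
  have hθlin : ∀ t, θ t = θ 0 + δ / ε * t := by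
    intro t
    have h1 : ∀ s, HasDerivAt (fun s => θ s - δ / ε * s) 0 s := fun s => by
      have h := (hθd s).fun_sub ((hasDerivAt_id s).const_mul (δ / ε))
      exact h.congr_deriv (by simp)
    have h2 := is_const_of_deriv_eq_zero (fun s => (h1 s).differentiableAt)
      (fun s => (h1 s).deriv) t 0
    simp only [mul_zero, sub_zero] at h2
    linarith
  refine ⟨ε, hε0, hεδ, hdε, ?_, ?_⟩
  · intro t
    have h1 : θ (t + ε * L / δ) = θ t + L := by
      rw [hθlin, hθlin t]
      field_simp
      ring
    rw [huθ, huθ t, h1, hγper]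
  · intro T hT hTper
    have h1 : (θ T : AddCircle L) = θ 0 := by
      apply hinj
      change γ (θ T) = γ (θ 0)
      have h := hTper 0
      rw [zero_add] at h
      rw [hγθ, hγθ, h]
    rw [hθlin T, AddCircle.coe_add, add_eq_left, AddCircle.coe_eq_zero_iff] at h1
    obtain ⟨n, hn⟩ := h1
    rw [zsmul_eq_mul] at hn
    have hpos : 0 < δ / ε * T := by positivity
    have hn0 : 0 < n := by
      rw [← hn] at hpos
      exact_mod_cast (pos_iff_pos_of_mul_pos hpos).2 hL
    have hn1 : (1 : ℝ) ≤ n := by exact_mod_cast hn0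
    have h2 : L ≤ δ / ε * T := by
      rw [← hn]
      nlinarith
    calc ε * L / δ ≤ ε * (δ / ε * T) / δ := by gcongr
      _ = T := by field_simp
end

section
/- Choreography reduction: let Ω ⊂ ℂ be open, N ≥ 1 an integer, and H : F_N(Ω) → ℝ a C¹ function invariant under every permutation of its N arguments. Let T > 0, θ_k = (k-1)T/N for k = 1,…,N, and let u : ℝ → Ω be C¹ and T-periodic such that (u(t+θ₁),…,u(t+θ_N)) ∈ F_N(Ω) for all t and u'(t) = -i·∇_{z₁}H(u(t+θ₁),…,u(t+θ_N)) for all t. Then z(t) := (u(t+θ₁),…,u(t+θ_N)) satisfies z_k'(t) = -i·∇_{z_k}H(z(t)) for all k = 1,…,N and all t. -/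
lemma iprCLM_injective : Function.Injective iprCLM := by
  intro a b h
  have h1 := DFunLike.congr_fun h 1
  have h2 := DFunLike.congr_fun h Complex.I
  simp [iprCLM] at h1 h2
  exact Complex.ext h1 h2

/-- The configuration space `F_N(Ω)` is open in each argument separately. -/
lemma eventually_update_mem {Ω : Set ℂ} (hΩopen : IsOpen Ω) {N : ℕ} {z : Fin N → ℂ}
    (hz : (∀ k, z k ∈ Ω) ∧ ∀ j k, j ≠ k → z j ≠ z k) (k : Fin N) :
    ∀ᶠ w in nhds (z k), (∀ i, Function.update z k w i ∈ Ω) ∧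
      ∀ i j, i ≠ j → Function.update z k w i ≠ Function.update z k w j := by
  have h1 : ∀ᶠ w in nhds (z k), w ∈ Ω := hΩopen.mem_nhds (hz.1 k)
  have h2 : ∀ᶠ w in nhds (z k), ∀ j, j ≠ k → w ≠ z j := by
    rw [Filter.eventually_all]
    intro j
    by_cases hj : j = k
    · simp [hj]
    · filter_upwards [isOpen_ne.mem_nhds (hz.2 k j (Ne.symm hj))] with w hw _ using hw
  filter_upwards [h1, h2] with w hw1 hw2
  refine ⟨fun i => ?_, fun i j hij => ?_⟩
  · by_cases hi : i = k
    · subst hi; simpa using hw1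
    · simpa [hi] using hz.1 i
  · by_cases hi : i = k
    · subst hi
      simpa [Ne.symm hij] using hw2 j (Ne.symm hij)
    · by_cases hj : j = k
      · subst hj
        simpa [hi] using (hw2 i hi).symm
      · simpa [hi, hj] using hz.2 i j hij

/-- Partial gradients of a permutation invariant function are permuted along with its arguments. -/
lemma grad_comp_perm {Ω : Set ℂ} (hΩopen : IsOpen Ω) {N : ℕ} {H : (Fin N → ℂ) → ℝ}
    (hHsym : ∀ σ : Equiv.Perm (Fin N), ∀ z : Fin N → ℂ,
      ((∀ k, z k ∈ Ω) ∧ ∀ j k, j ≠ k → z j ≠ z k) → H (z ∘ σ) = H z)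
    {gradH : Fin N → (Fin N → ℂ) → ℂ}
    (hgradH : ∀ z : Fin N → ℂ, ((∀ k, z k ∈ Ω) ∧ ∀ j k, j ≠ k → z j ≠ z k) → ∀ k,
      HasFDerivAt (fun w => H (Function.update z k w)) (iprCLM (gradH k z)) (z k))
    {z : Fin N → ℂ} (hz : (∀ k, z k ∈ Ω) ∧ ∀ j k, j ≠ k → z j ≠ z k)
    (σ : Equiv.Perm (Fin N)) (j : Fin N) : gradH j (z ∘ σ) = gradH (σ j) z := by
  have h1 := hgradH (z ∘ σ)
    ⟨fun k => hz.1 _, fun i k hik => hz.2 _ _ (fun h => hik (σ.injective h))⟩ j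
  have h2 := hgradH z hz (σ j)
  have h3 : (fun w => H (Function.update (z ∘ σ) j w)) =ᶠ[nhds (z (σ j))]
      fun w => H (Function.update z (σ j) w) := by
    filter_upwards [eventually_update_mem hΩopen hz (σ j)] with w hw
    rw [← hHsym σ _ hw, Function.update_comp_eq_of_injective z σ.injective]
  exact iprCLM_injective (h1.unique (h2.congr_of_eventuallyEq h3))

/-- Advancing the time by `k T / N` permutes the phase-shifted copies of `u` cyclically. -/
lemma shift_eq_comp_addLeft {N : ℕ} [NeZero N] {T : ℝ} {u : ℝ → ℂ}
    (huper : Function.Periodic u T) (k : Fin N) (t : ℝ) :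
    (fun j : Fin N => u (t + (k : ℕ) * T / N + (j : ℕ) * T / N)) =
      (fun j : Fin N => u (t + (j : ℕ) * T / N)) ∘ Equiv.addLeft k := by
  funext j
  have hN : (N : ℝ) ≠ 0 := Nat.cast_ne_zero.mpr (NeZero.ne N)
  have hdiv : (k : ℝ) + (j : ℝ) = ((k + j : Fin N) : ℕ) + N * (((k : ℕ) + j) / N : ℕ) := by
    rw [Fin.val_add]
    exact_mod_cast (Nat.mod_add_div ((k : ℕ) + j) N).symm
  -- the carry `(k + j) / N` counts the full periods that are dropped
  have harg : t + (k : ℕ) * T / N + (j : ℕ) * T / N =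
      t + ((k + j : Fin N) : ℕ) * T / N + (((k : ℕ) + j) / N : ℕ) * T := by
    have : t + (k : ℕ) * T / N + (j : ℕ) * T / N = t + ((k : ℝ) + j) * T / N := by ring
    rw [this, hdiv]
    field_simp
    ring
  simp only [Function.comp_apply, Equiv.coe_addLeft]
  rw [harg]
  exact huper.nat_mul _ _

/-- Choreography reduction: if `H` is a C¹ permutation invariant
Hamiltonian on `F_N(Ω)` and the `T`-periodic function `u` solves
`u' = -i∇_{z₁}H(u(·+θ₁),…,u(·+θ_N))` with `θ_k = (k-1)T/N`, then
`z(t) = (u(t+θ₁),…,u(t+θ_N))` solves `z_k' = -i∇_{z_k}H(z)` for every `k`. -/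
theorem choreography_reduction
    (Ω : Set ℂ) (hΩopen : IsOpen Ω)
    (N : ℕ) (hN : 0 < N)
    (H : (Fin N → ℂ) → ℝ)
    -- H is C¹ on F_N(Ω)
    (hHC : ContDiffOn ℝ 1 H {z : Fin N → ℂ | (∀ k, z k ∈ Ω) ∧ ∀ j k, j ≠ k → z j ≠ z k})
    -- H is invariant under all permutations of its arguments
    (hHsym : ∀ σ : Equiv.Perm (Fin N), ∀ z : Fin N → ℂ,
      ((∀ k, z k ∈ Ω) ∧ ∀ j k, j ≠ k → z j ≠ z k) → H (z ∘ σ) = H z)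
    -- gradH k z is the real gradient of H in its k-th argument at z
    (gradH : Fin N → (Fin N → ℂ) → ℂ)
    (hgradH : ∀ z : Fin N → ℂ, ((∀ k, z k ∈ Ω) ∧ ∀ j k, j ≠ k → z j ≠ z k) → ∀ k,
      HasFDerivAt (fun w => H (Function.update z k w)) (iprCLM (gradH k z)) (z k))
    -- the T-periodic C¹ function u and the phase shifts θ_k = (k-1)T/N
    (T : ℝ) (hT : 0 < T)
    (u : ℝ → ℂ) (huC : ContDiff ℝ 1 u) (huper : Function.Periodic u T)
    (huΩ : ∀ t, u t ∈ Ω)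
    (hsep : ∀ t, ∀ j k : Fin N, j ≠ k →
      u (t + (j : ℕ) * T / N) ≠ u (t + (k : ℕ) * T / N))
    (hode : ∀ t, deriv u t =
      -(Complex.I * gradH ⟨0, hN⟩ (fun k => u (t + (k : ℕ) * T / N)))) :
    ∀ (k : Fin N) (t : ℝ),
      deriv (fun s => u (s + (k : ℕ) * T / N)) t =
        -(Complex.I * gradH k (fun j => u (t + (j : ℕ) * T / N))) := by
  intro k t
  have : NeZero N := ⟨hN.ne'⟩
  rw [deriv_comp_add_const, hode, shift_eq_comp_addLeft huper k t,
    grad_comp_perm hΩopen hHsym hgradH ⟨fun j => huΩ _, hsep t⟩]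
  have h0 : Equiv.addLeft k (⟨0, hN⟩ : Fin N) = k := add_zero k
  rw [h0]
end

section
/- Kernel of the linearization at the limit solution: if w : ℝ → ℂ is C¹, L-periodic and satisfies for all t, writing ν = ν(p(v(t))), κ = κ(p(v(t))), κ' = κ'(p(v(t))), the linear equation w'(t) + κ·ν·⟨iν, w(t)⟩ + (δκ'/(1 - δκ))·iν·⟨iν, w(t)⟩ - (1/δ)·iν·⟨ν, w(t)⟩ = 0, then there exists c ∈ ℝ with w = c·v'. -/
open Filter Topology

/-- A reparametrization `θ`, merely continuous at `t₁`, has derivative `1` there as soon as `f` and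
`f ∘ θ` have the same nonzero velocity. -/
lemma hasDerivAt_one_of_comp {f v : ℝ → ℂ} {θ : ℝ → ℝ} {a : ℂ} {t₁ : ℝ}
    (hf : HasDerivAt f a (θ t₁)) (hv : HasDerivAt v a t₁) (ha : a ≠ 0)
    (hθ : ContinuousAt θ t₁) (h : ∀ t, v t = f (θ t)) : HasDerivAt θ 1 t₁ := by
  rw [hasDerivAt_iff_tendsto_slope]
  have hD : Tendsto (fun t => dslope f (θ t₁) (θ t)) (𝓝 t₁) (𝓝 a) := by
    have h1 : ContinuousAt (dslope f (θ t₁)) (θ t₁) :=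
      continuousAt_dslope_same.2 hf.differentiableAt
    have h2 : Tendsto (fun t => dslope f (θ t₁) (θ t)) (𝓝 t₁) (𝓝 (dslope f (θ t₁) (θ t₁))) :=
      h1.tendsto.comp hθ.tendsto
    rwa [dslope_same, hf.deriv] at h2
  have hD' := hD.mono_left (nhdsWithin_le_nhds (s := {t₁}ᶜ))
  have hq := (hasDerivAt_iff_tendsto_slope.1 hv).div hD' ha
  rw [div_self ha] at hq
  have hre := (Complex.continuous_re.tendsto (1 : ℂ)).comp hq
  rw [Complex.one_re] at hre
  refine hre.congr' ?_
  filter_upwards [hD'.eventually_ne ha] with t ht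
  have e : slope v t₁ t = ((slope θ t₁ t : ℝ) : ℂ) * dslope f (θ t₁) (θ t) := by
    have e1 := sub_smul_dslope f (θ t₁) (θ t)
    rw [slope_def_module, slope_def_field, h t, h t₁, ← e1]
    simp only [Complex.real_smul]
    push_cast
    ring
  simp only [Function.comp, Pi.div_apply]
  rw [e, mul_div_cancel_right₀ _ ht, Complex.ofReal_re]

/-- Local lift of the nearest-point projection along `v` to the parameter line of `γ`. -/
lemma exists_lift {L δ : ℝ} (hL : 0 < L) {γ v q : ℝ → ℂ} (hγc : Continuous γ)
    (hγper : Function.Periodic γ L) (hγinj : Set.InjOn γ (Set.Ico 0 L)) (hvc : Continuous v)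
    (hq : ∀ t, q t ∈ Set.range γ) (hqd : ∀ t, dist (v t) (q t) = δ)
    (huniq : ∀ t s, dist (v t) (γ s) = δ → γ s = q t) (t₁ : ℝ) :
    ∃ θ : ℝ → ℝ, (∀ t, q t = γ (θ t)) ∧ ContinuousAt θ t₁ := by
  obtain ⟨s₁, hs₁⟩ := hq t₁
  have hex : ∀ t, ∃ s ∈ Set.Ico (s₁ - L / 2) (s₁ - L / 2 + L), γ s = q t := by
    intro t
    obtain ⟨s, hs⟩ := hq t
    obtain ⟨y, hy, hy'⟩ := hγper.exists_mem_Ico hL s (s₁ - L / 2)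
    exact ⟨y, hy, by rw [← hy', hs]⟩
  choose θ hθ hθq using hex
  -- Within half a period of `s₁`, only `s₁` itself maps to `q t₁`.
  have hinj : ∀ s ∈ Set.Icc (s₁ - L / 2) (s₁ + L / 2), γ s = γ s₁ → s = s₁ := by
    intro s hs h
    have e1 : γ (toIcoMod hL 0 s) = γ (toIcoMod hL 0 s₁) := by
      rw [toIcoMod, toIcoMod, hγper.sub_zsmul_eq, hγper.sub_zsmul_eq, h]
    have m1 := toIcoMod_mem_Ico hL 0 s
    have m2 := toIcoMod_mem_Ico hL 0 s₁
    rw [zero_add] at m1 m2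
    have e2 := hγinj m1 m2 e1
    rw [toIcoMod, toIcoMod, zsmul_eq_mul, zsmul_eq_mul] at e2
    set m := toIcoDiv hL 0 s
    set n := toIcoDiv hL 0 s₁
    have e3 : s - s₁ = ((m - n : ℤ) : ℝ) * L := by push_cast; linarith
    have hlt : |((m - n : ℤ) : ℝ)| < 1 := by
      rw [abs_lt]
      constructor
      · by_contra! hc
        nlinarith [hs.1]
      · by_contra! hc
        nlinarith [hs.2]
    have h0 : m - n = 0 := by
      rw [← Int.cast_abs] at hlt
      exact Int.abs_lt_one_iff.1 (by exact_mod_cast hlt)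
    rw [h0] at e3
    simp at e3
    linarith
  have hθ' : ∀ t, θ t ∈ Set.Icc (s₁ - L / 2) (s₁ + L / 2) := fun t =>
    ⟨(hθ t).1, by linarith [(hθ t).2]⟩
  have hθ1 : θ t₁ = s₁ := hinj _ (hθ' t₁) (by rw [hθq, hs₁])
  refine ⟨θ, fun t => (hθq t).symm, ?_⟩
  rw [ContinuousAt, hθ1]
  refine isCompact_Icc.tendsto_nhds_of_unique_mapClusterPt (Eventually.of_forall hθ') ?_
  intro s hs hcl
  refine hinj s hs ?_
  rw [hs₁]
  refine huniq t₁ s ?_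
  -- The pair `(t₁, s)` is a limit of pairs `(t, θ t)`, on which the distance equals `δ`.
  obtain ⟨U, hU, hUs⟩ := mapClusterPt_iff_ultrafilter.1 hcl
  have l1 : Tendsto (fun t => dist (v t) (γ (θ t))) U (𝓝 (dist (v t₁) (γ s))) :=
    ((hvc.tendsto t₁).mono_left hU).dist ((hγc.tendsto s).comp hUs)
  have l2 : (fun t => dist (v t) (γ (θ t))) = fun _ => δ := by
    funext t
    rw [hθq, hqd]
  rw [l2] at l1
  exact (tendsto_nhds_unique l1 tendsto_const_nhds)

/-- The linear equation in a moving orthonormal frame `(N, iN)` with `N' = K iN`: its periodic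
solutions are the real multiples of `(1 - δK) iN`. -/
lemma frame_kernel {L δ : ℝ} (hL : 0 < L) (hδ : 0 < δ) {N w : ℝ → ℂ} {K K' : ℝ → ℝ}
    (hN1 : ∀ t, (N t).re ^ 2 + (N t).im ^ 2 = 1)
    (hN : ∀ t, HasDerivAt N ((K t : ℂ) * (Complex.I * N t)) t)
    (hK : ∀ t, HasDerivAt K (K' t) t) (hpos : ∀ t, 0 < 1 - δ * K t)
    (hNL : N L = N 0) (hKL : K L = K 0) (hwL : w L = w 0) (hwd : Differentiable ℝ w)
    (hw : ∀ t, deriv w t + (K t * ipr (Complex.I * N t) (w t)) • N t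
        + ((δ * K' t / (1 - δ * K t)) * ipr (Complex.I * N t) (w t)) • (Complex.I * N t)
        - ((1/δ) * ipr (N t) (w t)) • (Complex.I * N t) = 0) :
    ∃ c : ℝ, ∀ t, w t = c • ((1 - δ * K t) • (Complex.I * N t)) := by
  have hre : ∀ {f : ℝ → ℂ} {f' : ℂ} {t : ℝ}, HasDerivAt f f' t →
      HasDerivAt (fun s => (f s).re) f'.re t := fun {f f' t} h =>
    (Complex.reCLM.hasFDerivAt.comp_hasDerivAt t h)
  have him : ∀ {f : ℝ → ℂ} {f' : ℂ} {t : ℝ}, HasDerivAt f f' t →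
      HasDerivAt (fun s => (f s).im) f'.im t := fun {f f' t} h =>
    (Complex.imCLM.hasFDerivAt.comp_hasDerivAt t h)
  have hδ0 := hδ.ne'
  have hwt : ∀ t, HasDerivAt w (deriv w t) t := fun t => (hwd t).hasDerivAt
  -- Real and imaginary parts of the equation, solved for `w'`.
  have hw1 : ∀ t, (deriv w t).re = -(K t * ipr (Complex.I * N t) (w t)) * (N t).re
        + ((δ * K' t / (1 - δ * K t)) * ipr (Complex.I * N t) (w t)) * (N t).im
        - ((1/δ) * ipr (N t) (w t)) * (N t).im := by
    intro t
    have h := congrArg Complex.re (hw t)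
    simp only [Complex.add_re, Complex.sub_re, Complex.real_smul, Complex.mul_re,
      Complex.ofReal_re, Complex.ofReal_im, Complex.mul_im, Complex.I_re, Complex.I_im,
      Complex.zero_re] at h
    linarith
  have hw2 : ∀ t, (deriv w t).im = -(K t * ipr (Complex.I * N t) (w t)) * (N t).im
        - ((δ * K' t / (1 - δ * K t)) * ipr (Complex.I * N t) (w t)) * (N t).re
        + ((1/δ) * ipr (N t) (w t)) * (N t).re := by
    intro t
    have h := congrArg Complex.im (hw t)
    simp only [Complex.add_im, Complex.sub_im, Complex.real_smul, Complex.mul_re,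
      Complex.ofReal_re, Complex.ofReal_im, Complex.mul_im, Complex.I_re, Complex.I_im,
      Complex.zero_im] at h
    linarith
  have hNr : ∀ t, HasDerivAt (fun s => (N s).re) (-(K t * (N t).im)) t := fun t => by
    have h := hre (hN t)
    simpa using h
  have hNi : ∀ t, HasDerivAt (fun s => (N s).im) (K t * (N t).re) t := fun t => by
    have h := him (hN t)
    simpa using h
  have hIa : ∀ t, ipr (Complex.I * N t) (w t) = -(N t).im * (w t).re + (N t).re * (w t).im := by
    intro t
    simp [ipr]
  have hb : ∀ t, HasDerivAt (fun s => ipr (N s) (w s)) 0 t := by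
    intro t
    have h := ((hNr t).mul (hre (hwt t))).add ((hNi t).mul (him (hwt t)))
    refine h.congr_deriv ?_
    rw [hw1, hw2]
    have e := hIa t
    have n1 := hN1 t
    generalize ipr (Complex.I * N t) (w t) = A at *
    linear_combination (-K t * A) * n1 - K t * e
  have ha : ∀ t, HasDerivAt (fun s => ipr (Complex.I * N s) (w s))
      (ipr (N t) (w t) * (1 - δ * K t) / δ
        - δ * K' t / (1 - δ * K t) * ipr (Complex.I * N t) (w t)) t := by
    intro t
    have h := ((hNi t).neg.mul (hre (hwt t))).add ((hNr t).mul (him (hwt t)))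
    have h' : HasDerivAt (fun s => ipr (Complex.I * N s) (w s)) _ t :=
      h.congr_of_eventuallyEq (Eventually.of_forall fun s => by
        simp [ipr])
    refine h'.congr_deriv ?_
    rw [hw1, hw2]
    have e : ipr (N t) (w t) = (N t).re * (w t).re + (N t).im * (w t).im := rfl
    have n1 := hN1 t
    generalize ipr (Complex.I * N t) (w t) = A at *
    generalize ipr (N t) (w t) = B at *
    generalize δ * K' t / (1 - δ * K t) = F at *
    simp only [Pi.neg_apply]
    have e2 : B * (1 - δ * K t) / δ = (1/δ) * B - B * K t := by field_simp
    rw [e2]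
    linear_combination (-F * A + (1/δ) * B) * n1 + K t * e
  have hc : ∀ t, HasDerivAt (fun s => ipr (Complex.I * N s) (w s) / (1 - δ * K s))
      (ipr (N t) (w t) / δ) t := by
    intro t
    have hp := (hpos t).ne'
    refine ((ha t).div (((hK t).const_mul δ).const_sub 1) hp).congr_deriv ?_
    field_simp
    ring
  have hbc : ∀ t, ipr (N t) (w t) = ipr (N 0) (w 0) := fun t =>
    is_const_of_deriv_eq_zero (fun s => (hb s).differentiableAt) (fun s => (hb s).deriv) t 0
  set b := ipr (N 0) (w 0) with hbdef
  have hg : ∀ t, HasDerivAt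
      (fun s => ipr (Complex.I * N s) (w s) / (1 - δ * K s) - b / δ * s) 0 t := by
    intro t
    refine ((hc t).sub ((hasDerivAt_id t).const_mul (b / δ))).congr_deriv ?_
    rw [hbc]
    ring
  have hgc := fun t =>
    is_const_of_deriv_eq_zero (fun s => (hg s).differentiableAt) (fun s => (hg s).deriv) t 0
  have hb0 : b = 0 := by
    have h := hgc L
    simp only [hNL, hKL, hwL] at h
    have h2 : b / δ * L = 0 := by linarith
    rcases mul_eq_zero.1 h2 with h3 | h3
    · exact (div_eq_zero_iff.1 h3).resolve_right hδ0
    · exact absurd h3 hL.ne'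
  refine ⟨ipr (Complex.I * N 0) (w 0) / (1 - δ * K 0), fun t => ?_⟩
  have h := hgc t
  simp only [hb0, zero_div, zero_mul, sub_zero] at h
  have hp := (hpos t).ne'
  rw [← h, smul_smul, div_mul_cancel₀ _ hp]
  have hB : (N t).re * (w t).re + (N t).im * (w t).im = 0 := by
    have := hbc t
    rwa [hb0] at this
  have n1 := hN1 t
  rw [hIa]
  apply Complex.ext
  · simp
    linear_combination (-(w t).re) * n1 + (N t).re * hB
  · simp
    linear_combination (-(w t).im) * n1 + (N t).im * hB

/-- Kernel of the linearization at the limit solution `v`: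
any C¹ `L`-periodic solution `w` of the linearized equation
`w' + κ·ν⟨iν,w⟩ + (δκ'/(1-δκ))·iν⟨iν,w⟩ - (1/δ)·iν⟨ν,w⟩ = 0`
(coefficients evaluated at `p(v(t))`) is a real multiple of `v'`. -/
theorem kernel_of_linearization
    (L : ℝ) (hL : 0 < L) (γ : ℝ → ℂ)
    (hγC : ContDiff ℝ 3 γ) (hγper : Function.Periodic γ L)
    (hγunit : ∀ t, ‖deriv γ t‖ = 1) (hγinj : Set.InjOn γ (Set.Ico 0 L))
    (Γset : Set ℂ) (hΓ : Γset = Set.range γ)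
    (ν : ℂ → ℂ) (hν : ∀ t, ν (γ t) = -Complex.I * deriv γ t)
    (κ : ℂ → ℝ) (hκ : ∀ t, deriv (fun s => ν (γ s)) t = (κ (γ t) : ℂ) * deriv γ t)
    (κ' : ℂ → ℝ) (hκ' : ∀ t, deriv (fun s => κ (γ s)) t = κ' (γ t))
    (Ω : Set ℂ) (hΩopen : IsOpen Ω) (hΩconn : IsConnected Ω)
    (hΓfr : Γset ⊆ frontier Ω)
    (hΓcomp : ∀ q ∈ Γset, connectedComponentIn (frontier Ω) q = Γset)
    (d : ℂ → ℝ) (hd : ∀ z, d z = Metric.infDist z Γset)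
    (δ : ℝ) (hδ : 0 < δ) (hκδ : ∀ q ∈ Γset, |κ q| < 1/δ)
    (p : ℂ → ℂ)
    (hp : ∀ z ∈ Ω, d z ≤ δ →
      p z ∈ Γset ∧ dist z (p z) = d z ∧ ∀ q ∈ Γset, dist z q = d z → q = p z)
    (hin : ∀ z ∈ Ω, d z ≤ δ → z = p z - (d z : ℝ) • ν (p z))
    -- the limit solution v at distance δ from Γ
    (v : ℝ → ℂ) (hvC : ContDiff ℝ 1 v) (hvΩ : ∀ t, v t ∈ Ω)
    (hvper : Function.Periodic v L) (hvd : ∀ t, d (v t) = δ)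
    (hvode : ∀ t, deriv v t = (1 - δ * κ (p (v t))) • (Complex.I * ν (p (v t))))
    -- the kernel element w
    (w : ℝ → ℂ) (hwC : ContDiff ℝ 1 w) (hwper : Function.Periodic w L)
    (hw : ∀ t,
      deriv w t
        + (κ (p (v t)) * ipr (Complex.I * ν (p (v t))) (w t)) • ν (p (v t))
        + ((δ * κ' (p (v t)) / (1 - δ * κ (p (v t))))
            * ipr (Complex.I * ν (p (v t))) (w t)) • (Complex.I * ν (p (v t)))
        - ((1/δ) * ipr (ν (p (v t))) (w t)) • (Complex.I * ν (p (v t))) = 0) :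
    ∃ c : ℝ, ∀ t, w t = c • deriv v t := by
  have hγd : ∀ s, HasDerivAt γ (deriv γ s) s := fun s =>
    (hγC.differentiable (by norm_num) s).hasDerivAt
  have hγ1C : ContDiff ℝ 2 (deriv γ) :=
    ((contDiff_succ_iff_deriv (n := 2)).1 (by exact_mod_cast hγC)).2.2
  have hνeq : (fun s => ν (γ s)) = fun s => -Complex.I * deriv γ s := funext hν
  have hνC : ContDiff ℝ 2 (fun s => ν (γ s)) := by
    rw [hνeq]
    exact contDiff_const.mul hγ1C
  have hνd : ∀ s, HasDerivAt (fun s => ν (γ s)) ((κ (γ s) : ℂ) * deriv γ s) s := fun s => by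
    rw [← hκ s]
    exact (hνC.differentiable (by norm_num) s).hasDerivAt
  have hν1C : ContDiff ℝ 1 (deriv (fun s => ν (γ s))) :=
    ((contDiff_succ_iff_deriv (n := 1)).1 (by exact_mod_cast hνC)).2.2
  have hγn : ∀ s, (deriv γ s).re ^ 2 + (deriv γ s).im ^ 2 = 1 := by
    intro s
    have h := Complex.sq_norm (deriv γ s)
    rw [hγunit s, Complex.normSq_apply] at h
    linarith
  -- `κ ∘ γ` is `C¹`, being `⟨(ν ∘ γ)', γ'⟩`.
  have hκeq : (fun s => κ (γ s)) = fun s =>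
      (deriv (fun s => ν (γ s)) s).re * (deriv γ s).re
        + (deriv (fun s => ν (γ s)) s).im * (deriv γ s).im := by
    funext s
    rw [hκ s]
    simp only [Complex.mul_re, Complex.mul_im, Complex.ofReal_re, Complex.ofReal_im]
    linear_combination (-κ (γ s)) * hγn s
  have hκd : ∀ s, HasDerivAt (fun s => κ (γ s)) (κ' (γ s)) s := by
    have hd1 := hν1C.differentiable (by norm_num)
    have hd2 := hγ1C.differentiable (by norm_num)
    have hdiff : Differentiable ℝ (fun s => κ (γ s)) := by
      rw [hκeq]
      exact ((Complex.reCLM.differentiable.comp hd1).mul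
        (Complex.reCLM.differentiable.comp hd2)).add
        ((Complex.imCLM.differentiable.comp hd1).mul (Complex.imCLM.differentiable.comp hd2))
    intro s
    rw [← hκ' s]
    exact (hdiff s).hasDerivAt
  have hIν : ∀ s, Complex.I * ν (γ s) = deriv γ s := by
    intro s
    rw [hν, ← mul_assoc]
    simp
  have hpv := fun t => hp (v t) (hvΩ t) (hvd t).le
  have hpos' : ∀ z ∈ Γset, 0 < 1 - δ * κ z := by
    intro z hz
    have h := (abs_lt.1 (hκδ z hz)).2
    rw [lt_div_iff₀ hδ] at h
    linarith
  have key : ∀ t, HasDerivAt (fun t => ν (p (v t)))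
        ((κ (p (v t)) : ℂ) * (Complex.I * ν (p (v t)))) t ∧
      HasDerivAt (fun t => κ (p (v t))) (κ' (p (v t))) t := by
    intro t₁
    obtain ⟨θ, hθ, hθc⟩ := exists_lift (q := fun t => p (v t)) (δ := δ) hL hγC.continuous hγper
      hγinj hvC.continuous (fun t => hΓ ▸ (hpv t).1) (fun t => (hpv t).2.1.trans (hvd t))
      (fun t s h => (hpv t).2.2 _ (hΓ ▸ Set.mem_range_self s) (h.trans (hvd t).symm)) t₁
    have hp1 := hpos' _ (hpv t₁).1
    have hθd : HasDerivAt θ 1 t₁ := by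
      refine hasDerivAt_one_of_comp (f := fun s => γ s - δ • ν (γ s)) (v := v)
        ((hγd _).sub ((hνd _).const_smul δ)) ?_ ?_ hθc ?_
      · have h := (hvC.differentiable (by norm_num) t₁).hasDerivAt
        rw [hvode t₁, hθ t₁, hIν] at h
        refine h.congr_deriv ?_
        simp only [Complex.real_smul]
        push_cast
        ring
      · have e : deriv γ (θ t₁) - δ • ((κ (γ (θ t₁)) : ℂ) * deriv γ (θ t₁))
            = ((1 - δ * κ (γ (θ t₁)) : ℝ) : ℂ) * deriv γ (θ t₁) := by
          simp only [Complex.real_smul]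
          push_cast
          ring
        rw [e]
        rw [hθ t₁] at hp1
        refine mul_ne_zero (Complex.ofReal_ne_zero.2 hp1.ne') ?_
        rw [← norm_ne_zero_iff, hγunit]
        exact one_ne_zero
      · intro t
        have h := hin (v t) (hvΩ t) (hvd t).le
        rwa [hvd, hθ t] at h
    simp only [hθ, hIν]
    constructor
    · simpa [Function.comp_def] using (hνd (θ t₁)).scomp t₁ hθd
    · simpa [Function.comp_def] using (hκd (θ t₁)).scomp t₁ hθd
  have hvL : v L = v 0 := by simpa using hvper 0
  have hwL : w L = w 0 := by simpa using hwper 0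
  obtain ⟨c, hc⟩ := frame_kernel (N := fun t => ν (p (v t))) (K := fun t => κ (p (v t)))
    (K' := fun t => κ' (p (v t))) (w := w) hL hδ
    (by
      intro t
      have hm := (hpv t).1
      rw [hΓ] at hm
      obtain ⟨s, hs⟩ := hm
      simp only [← hs, hν]
      simp
      linarith [hγn s])
    (fun t => (key t).1) (fun t => (key t).2) (fun t => hpos' _ (hpv t).1)
    (by simp only [hvL]) (by simp only [hvL]) hwL (hwC.differentiable (by norm_num)) hw
  exact ⟨c, fun t => by rw [hc t, hvode t]⟩
end

section
/- Kernel of the adjoint linearization: define a(t) = δ·κ'(p(v(t)))/(1 - δκ(p(v(t)))). Then a(t) = -(d/dt)log(1 - δκ(p(v(t)))), and whenever q, s : ℝ → ℝ are C¹ and L-periodic with q'(t) = a(t)q(t) and s'(t) = a(t)s(t) + q(t)/δ for all t, one has q ≡ 0 and t ↦ s(t)(1 - δκ(p(v(t)))) is constant; consequently w := s·v' + q·ν(p(v)) is a constant real multiple of i·ν(p(v)). -/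
open Filter Topology

/-- A periodic function that is injective on one period separates points at distance less than
the period. -/
theorem eq_of_abs_sub_lt_period {L : ℝ} (hL : 0 < L) {γ : ℝ → ℂ} (hper : Function.Periodic γ L)
    (hinj : Set.InjOn γ (Set.Ico 0 L)) {x y : ℝ} (h : γ x = γ y) (hxy : |x - y| < L) : x = y := by
  have key : ∀ z, γ (toIcoMod hL 0 z) = γ z := fun z => by
    rw [toIcoMod]; exact hper.sub_zsmul_eq _
  have hm : ∀ z, toIcoMod hL 0 z ∈ Set.Ico 0 L := fun z => by
    simpa using toIcoMod_mem_Ico hL 0 z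
  have h1 := hinj (hm y) (hm x) (by rw [key, key, h])
  obtain ⟨n, hn⟩ := (toIcoMod_eq_toIcoMod hL).1 h1
  rw [hn, zsmul_eq_mul, abs_mul, abs_of_pos hL] at hxy
  have h2 : |(n : ℝ)| < 1 := by
    by_contra hc
    nlinarith [not_lt.1 hc]
  have h3 : n = 0 := by
    have : |n| < 1 := by exact_mod_cast h2
    exact Int.abs_lt_one_iff.1 this
  rw [h3] at hn
  simp at hn
  linarith

/-- If `v = V ∘ σ`, with `σ` valued in a compact set `K`, `v` continuous at `t₁`, and no parameter in
`K` other than `τ₁` is mapped to `v t₁` by `V`, then `σ` tends to `τ₁` at `t₁`. -/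
theorem tendsto_param_s9 {K : Set ℝ} (hK : IsCompact K) {V v : ℝ → ℂ} {σ : ℝ → ℝ} {t₁ τ₁ : ℝ}
    (hV : Continuous V) (hv : ContinuousAt v t₁) (hσK : ∀ t, σ t ∈ K)
    (hσ : ∀ t, V (σ t) = v t) (huniq : ∀ x ∈ K, V x = v t₁ → x = τ₁) :
    Tendsto σ (𝓝 t₁) (𝓝 τ₁) := by
  refine hK.tendsto_nhds_of_unique_mapClusterPt (Eventually.of_forall hσK) fun x hx hcl => ?_
  refine huniq x hx ?_
  have h1 : MapClusterPt (V x) (𝓝 t₁) (V ∘ σ) := hcl.continuousAt_comp hV.continuousAt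
  have h2 : V ∘ σ = v := funext hσ
  rw [h2] at h1
  exact eq_of_nhds_neBot (h1.clusterPt.mono hv).neBot

/-- Two curves `V` and `v = V ∘ σ` with the same nonzero velocity `m • e`: the reparametrization
`σ` has derivative one.  The component along `e` reduces this to the one-variable inverse function
theorem. -/
theorem hasDerivAt_param {V v : ℝ → ℂ} {σ : ℝ → ℝ} {t₁ τ₁ m : ℝ} {e : ℂ} (he : ‖e‖ = 1)
    (hm : m ≠ 0) (hV : HasStrictDerivAt V (m • e) τ₁) (hv : HasDerivAt v (m • e) t₁)
    (hσ : ∀ t, V (σ t) = v t) (hlim : Tendsto σ (𝓝 t₁) (𝓝 τ₁)) (hσ₁ : V τ₁ = v t₁) :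
    HasDerivAt σ 1 t₁ := by
  let ℓ : ℂ →L[ℝ] ℝ := innerSL ℝ e
  have hℓ : ℓ (m • e) = m := by
    simp only [map_smul, ℓ, innerSL_apply_apply, real_inner_self_eq_norm_sq, he, smul_eq_mul]
    ring
  have hg : HasStrictDerivAt (fun τ => ℓ (V τ)) m τ₁ := by
    have := ℓ.hasStrictFDerivAt.comp_hasStrictDerivAt τ₁ hV
    rwa [hℓ] at this
  have hh : HasDerivAt (fun t => ℓ (v t)) m t₁ := by
    have := ℓ.hasFDerivAt.comp_hasDerivAt t₁ hv
    rwa [hℓ] at this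
  have hinv := (hg.to_localInverse hm).hasDerivAt
  have hleft := hlim.eventually (hg.eventually_left_inverse hm)
  rw [hσ₁] at hinv
  have hcomp := hinv.comp t₁ hh
  rw [inv_mul_cancel₀ hm] at hcomp
  refine hcomp.congr_of_eventuallyEq ?_
  filter_upwards [hleft] with t ht
  rw [hσ t] at ht
  exact ht.symm

/-- The linear algebra of the adjoint system, for any positive periodic `m` with `m' = -a m`. -/
theorem adjoint_system {L δ : ℝ} (hL : 0 < L) (hδ : 0 < δ) {a m q s : ℝ → ℝ}
    (hm0 : ∀ t, 0 < m t) (hm : ∀ t, HasDerivAt m (-(a t * m t)) t) (hmper : Function.Periodic m L)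
    (hq : Differentiable ℝ q) (hs : Differentiable ℝ s) (hsper : Function.Periodic s L)
    (hq' : ∀ t, deriv q t = a t * q t) (hs' : ∀ t, deriv s t = a t * s t + q t / δ) :
    (∀ t, q t = 0) ∧ ∃ c : ℝ, ∀ t, s t * m t = c := by
  have h1 : ∀ t, HasDerivAt (fun t => q t * m t) 0 t := fun t => by
    refine HasDerivAt.congr_deriv ((hq t).hasDerivAt.mul (hm t)) ?_
    rw [hq']; ring
  have hc : ∀ t, q t * m t = q 0 * m 0 := fun t =>
    is_const_of_deriv_eq_zero (fun t => (h1 t).differentiableAt) (fun t => (h1 t).deriv) t 0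
  set c := q 0 * m 0 with hcdef
  have h2 : ∀ t, HasDerivAt (fun t => s t * m t - t * (c / δ)) 0 t := fun t => by
    refine HasDerivAt.congr_deriv (((hs t).hasDerivAt.mul (hm t)).sub ((hasDerivAt_id t).mul_const (c / δ))) ?_
    rw [hs', ← hc t]; ring
  have hk : ∀ t, s t * m t - t * (c / δ) = s 0 * m 0 := fun t => by
    simpa using
      is_const_of_deriv_eq_zero (fun t => (h2 t).differentiableAt) (fun t => (h2 t).deriv) t 0
  have hc0 : c = 0 := by
    have h3 := hk L
    have h4 : s L = s 0 := by simpa using hsper 0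
    have h5 : m L = m 0 := by simpa using hmper 0
    rw [h4, h5] at h3
    have h6 : L * (c / δ) = 0 := by linarith
    have h7 := (mul_eq_zero.1 h6).resolve_left hL.ne'
    exact (div_eq_zero_iff.1 h7).resolve_right hδ.ne'
  refine ⟨fun t => ?_, s 0 * m 0, fun t => ?_⟩
  · exact (mul_eq_zero.1 ((hc t).trans hc0)).resolve_right (hm0 t).ne'
  · simpa [hc0] using hk t

/-- Kernel of the adjoint linearization: with
`a(t) = δκ'(p(v(t)))/(1 - δκ(p(v(t))))` one has `a = -(d/dt)log(1 - δκ(p(v)))`, and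
any C¹ `L`-periodic solution `(q,s)` of `q' = aq`, `s' = as + q/δ` satisfies `q ≡ 0`,
`s·(1 - δκ(p(v)))` constant; consequently `w = s·v' + q·ν(p(v))` is a constant real
multiple of `i·ν(p(v))`. -/
theorem kernel_of_adjoint_linearization
    (L : ℝ) (hL : 0 < L) (γ : ℝ → ℂ)
    (hγC : ContDiff ℝ 3 γ) (hγper : Function.Periodic γ L)
    (hγunit : ∀ t, ‖deriv γ t‖ = 1) (hγinj : Set.InjOn γ (Set.Ico 0 L))
    (Γset : Set ℂ) (hΓ : Γset = Set.range γ)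
    (ν : ℂ → ℂ) (hν : ∀ t, ν (γ t) = -Complex.I * deriv γ t)
    (κ : ℂ → ℝ) (hκ : ∀ t, deriv (fun s => ν (γ s)) t = (κ (γ t) : ℂ) * deriv γ t)
    (κ' : ℂ → ℝ) (hκ' : ∀ t, deriv (fun s => κ (γ s)) t = κ' (γ t))
    (Ω : Set ℂ) (hΩopen : IsOpen Ω) (hΩconn : IsConnected Ω)
    (hΓfr : Γset ⊆ frontier Ω)
    (hΓcomp : ∀ q ∈ Γset, connectedComponentIn (frontier Ω) q = Γset)
    (d : ℂ → ℝ) (hd : ∀ z, d z = Metric.infDist z Γset)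
    (δ : ℝ) (hδ : 0 < δ) (hκδ : ∀ q ∈ Γset, |κ q| < 1/δ)
    (p : ℂ → ℂ)
    (hp : ∀ z ∈ Ω, d z ≤ δ →
      p z ∈ Γset ∧ dist z (p z) = d z ∧ ∀ q ∈ Γset, dist z q = d z → q = p z)
    (hin : ∀ z ∈ Ω, d z ≤ δ → z = p z - (d z : ℝ) • ν (p z))
    -- the limit solution v at distance δ from Γ
    (v : ℝ → ℂ) (hvC : ContDiff ℝ 1 v) (hvΩ : ∀ t, v t ∈ Ω)
    (hvper : Function.Periodic v L) (hvd : ∀ t, d (v t) = δ)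
    (hvode : ∀ t, deriv v t = (1 - δ * κ (p (v t))) • (Complex.I * ν (p (v t))))
    -- the coefficient a
    (a : ℝ → ℝ) (ha : ∀ t, a t = δ * κ' (p (v t)) / (1 - δ * κ (p (v t)))) :
    (∀ t, a t = -deriv (fun s => Real.log (1 - δ * κ (p (v s)))) t) ∧
    ∀ q s : ℝ → ℝ, ContDiff ℝ 1 q → ContDiff ℝ 1 s →
      Function.Periodic q L → Function.Periodic s L →
      (∀ t, deriv q t = a t * q t) → (∀ t, deriv s t = a t * s t + q t / δ) →
      (∀ t, q t = 0) ∧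
      (∃ c : ℝ, ∀ t, s t * (1 - δ * κ (p (v t))) = c) ∧
      (∃ c : ℝ, ∀ t,
        s t • deriv v t + q t • ν (p (v t)) = c • (Complex.I * ν (p (v t)))) := by
  have hγ2 : ContDiff ℝ 2 (deriv γ) := ContDiff.deriv' (by exact_mod_cast hγC)
  have hνγ : (fun τ => ν (γ τ)) = fun τ => -Complex.I * deriv γ τ := funext hν
  have hN2 : ContDiff ℝ 2 (fun τ => ν (γ τ)) := by
    rw [hνγ]; exact contDiff_const.mul hγ2
  have hN1 : ContDiff ℝ 1 (deriv fun τ => ν (γ τ)) := ContDiff.deriv' (by exact_mod_cast hN2)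
  -- `κ ∘ γ` is recovered from `(ν ∘ γ)' = κ γ'` by pairing with the unit vector `γ'`.
  have hκγ : Differentiable ℝ (fun τ => κ (γ τ)) := by
    have hinner : (fun τ => κ (γ τ)) =
        fun τ => inner ℝ (deriv γ τ) (deriv (fun s => ν (γ s)) τ) := by
      funext τ
      rw [hκ, ← Complex.real_smul, inner_smul_right, real_inner_self_eq_norm_sq, hγunit]
      ring
    rw [hinner]
    exact (hγ2.differentiable (by norm_num)).inner ℝ (hN1.differentiable (by norm_num))
  set V : ℝ → ℂ := fun τ => γ τ - δ • ν (γ τ) with hVdef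
  have hVC : ContDiff ℝ 1 V :=
    (hγC.of_le (by norm_num)).sub ((hN2.of_le (by norm_num)).const_smul δ)
  have hVd : ∀ τ, HasStrictDerivAt V ((1 - δ * κ (γ τ)) • deriv γ τ) τ := fun τ => by
    have h1 := (hγC.differentiable (by norm_num) τ).hasDerivAt
    have h2 := (hN2.differentiable (by norm_num) τ).hasDerivAt
    have h3 : HasDerivAt V ((1 - δ * κ (γ τ)) • deriv γ τ) τ := by
      refine HasDerivAt.congr_deriv (h1.sub (h2.const_smul δ)) ?_
      rw [hκ]
      simp only [Complex.real_smul]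
      push_cast
      ring
    have h4 := hVC.contDiffAt.hasStrictDerivAt (x := τ) (by norm_num)
    rwa [h3.deriv] at h4
  have hνunit : ∀ τ, ‖ν (γ τ)‖ = 1 := fun τ => by simp [hν, hγunit]
  have hdle : ∀ t, d (v t) ≤ δ := fun t => (hvd t).le
  have huΓ : ∀ t, ∃ τ, γ τ = p (v t) := fun t => by
    have := (hp (v t) (hvΩ t) (hdle t)).1
    rwa [hΓ] at this
  have hvu : ∀ t, v t = p (v t) - δ • ν (p (v t)) := fun t => by
    have := hin (v t) (hvΩ t) (hdle t)
    rwa [hvd t] at this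
  have hfoot : ∀ t x, V x = v t → γ x = p (v t) := fun t x hx => by
    refine (hp (v t) (hvΩ t) (hdle t)).2.2 (γ x) (hΓ ▸ ⟨x, rfl⟩) ?_
    rw [hvd, ← hx, dist_eq_norm, hVdef]
    simp [hνunit, abs_of_pos hδ]
  have hmpos : ∀ t, 0 < 1 - δ * κ (p (v t)) := fun t => by
    have h1 := hκδ _ (hp (v t) (hvΩ t) (hdle t)).1
    have h2 := (lt_div_iff₀ hδ).1 ((le_abs_self _).trans_lt h1)
    linarith
  -- The foot point `p ∘ v` moves along `Γ` with unit speed.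
  have hspeed : ∀ t₁, HasDerivAt (fun t => κ (p (v t))) (κ' (p (v t₁))) t₁ := fun t₁ => by
    obtain ⟨τ₁, hτ₁⟩ := huΓ t₁
    have hex : ∀ t, ∃ x ∈ Set.Icc (τ₁ - L / 2) (τ₁ + L / 2), γ x = p (v t) := fun t => by
      obtain ⟨τ, hτ⟩ := huΓ t
      obtain ⟨y, hy, hxy⟩ := hγper.exists_mem_Ico hL τ (τ₁ - L / 2)
      exact ⟨y, ⟨hy.1, by linarith [hy.2]⟩, by rw [← hxy, hτ]⟩
    choose σ hσK hσ using hex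
    have hVσ : ∀ t, V (σ t) = v t := fun t => by
      rw [hvu t, ← hσ t]
    have hVτ₁ : V τ₁ = v t₁ := by rw [hvu t₁, ← hτ₁]
    have huniq : ∀ x ∈ Set.Icc (τ₁ - L / 2) (τ₁ + L / 2), V x = v t₁ → x = τ₁ := fun x hx hVx => by
      refine eq_of_abs_sub_lt_period hL hγper hγinj ((hfoot t₁ x hVx).trans hτ₁.symm) ?_
      rw [abs_lt]
      constructor <;> linarith [hx.1, hx.2]
    have hlim : Tendsto σ (𝓝 t₁) (𝓝 τ₁) :=
      tendsto_param_s9 isCompact_Icc hVC.continuous hvC.continuous.continuousAt hσK hVσ huniq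
    have hv' : HasDerivAt v ((1 - δ * κ (γ τ₁)) • deriv γ τ₁) t₁ := by
      refine HasDerivAt.congr_deriv ((hvC.differentiable (by norm_num) t₁).hasDerivAt) ?_
      rw [hvode, ← hτ₁, hν, ← mul_assoc, mul_neg, Complex.I_mul_I]
      simp
    have hσ' : HasDerivAt σ 1 t₁ :=
      hasDerivAt_param (hγunit τ₁) (by rw [hτ₁]; exact (hmpos t₁).ne') (hVd τ₁) hv' hVσ hlim hVτ₁
    have hσt₁ : σ t₁ = τ₁ := huniq _ (hσK t₁) (hVσ t₁)
    have hκd : HasDerivAt (fun τ => κ (γ τ)) (κ' (γ τ₁)) (σ t₁) := by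
      rw [hσt₁, ← hκ']; exact (hκγ τ₁).hasDerivAt
    have hcomp := hκd.comp t₁ hσ'
    rw [mul_one, hτ₁] at hcomp
    refine hcomp.congr_of_eventuallyEq (Eventually.of_forall fun t => ?_)
    simp [hσ t]
  have hm : ∀ t, HasDerivAt (fun t => 1 - δ * κ (p (v t)))
      (-(a t * (1 - δ * κ (p (v t))))) t := fun t => by
    refine HasDerivAt.congr_deriv (((hspeed t).const_mul δ).const_sub 1) ?_
    rw [ha, div_mul_cancel₀ _ (hmpos t).ne']
  refine ⟨fun t => ?_, fun q s hq hs _ hsper hq' hs' => ?_⟩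
  · rw [((hm t).log (hmpos t).ne').deriv, neg_div, neg_neg, mul_div_cancel_right₀ _ (hmpos t).ne']
  · obtain ⟨hq0, c, hc⟩ := adjoint_system hL hδ hmpos hm (fun t => by simp only [hvper t])
      (hq.differentiable (by norm_num)) (hs.differentiable (by norm_num)) hsper hq' hs'
    refine ⟨hq0, ⟨c, hc⟩, c, fun t => ?_⟩
    rw [hq0 t, hvode t, zero_smul, add_zero, smul_smul, hc t]
end

section
/- Derivative of the solution branch at r = 0: suppose w : ℝ → ℂ is C¹, L-periodic and satisfies for all t, writing ν = ν(p(v(t))), κ = κ(p(v(t))), κ' = κ'(p(v(t))), the inhomogeneous linear equation w'(t) + κ·ν·⟨iν, w(t)⟩ + (δκ'/(1 - δκ))·iν·⟨iν, w(t)⟩ - (1/δ)·iν·⟨ν, w(t)⟩ = -(δ/2)κ'·ν + (1/2)(1 - δκ)κ·iν, together with the orthogonality condition ∫₀^L ( ⟨w(t), v'(t)⟩ + ⟨w'(t), v''(t)⟩ ) dt = 0 (note v is automatically C²). Then w(t) = -(δ/2)·κ(p(v(t)))·ν(p(v(t))) for all t. -/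
/-! ### The linear equation in the moving frame -/

lemma ipr_hasDerivAt {f g : ℝ → ℂ} {f' g' : ℂ} {t : ℝ}
    (hf : HasDerivAt f f' t) (hg : HasDerivAt g g' t) :
    HasDerivAt (fun s => ipr (f s) (g s)) (ipr f' (g t) + ipr (f t) g') t := by
  have re {h : ℝ → ℂ} {h' : ℂ} (hh : HasDerivAt h h' t) :
      HasDerivAt (fun s => (h s).re) h'.re t :=
    Complex.reCLM.hasFDerivAt.comp_hasDerivAt t hh
  have im {h : ℝ → ℂ} {h' : ℂ} (hh : HasDerivAt h h' t) :
      HasDerivAt (fun s => (h s).im) h'.im t :=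
    Complex.imCLM.hasFDerivAt.comp_hasDerivAt t hh
  refine (((re hf).mul (re hg)).add ((im hf).mul (im hg))).congr_deriv ?_
  simp only [ipr]
  ring

/-- The analysis of the linear equation in the moving frame `N, iN` with `N' = k · iN`; here
`N`, `k`, `k1` stand for `ν`, `κ`, `κ'` along the projected curve. -/
lemma linear_solution_eq (L : ℝ) (hL : 0 < L) (δ : ℝ) (hδ : 0 < δ)
    (N : ℝ → ℂ) (k k1 : ℝ → ℝ) (v w : ℝ → ℂ)
    (hN1 : ∀ t, (N t).re ^ 2 + (N t).im ^ 2 = 1)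
    (hN : ∀ t, HasDerivAt N ((k t : ℂ) * (Complex.I * N t)) t)
    (hk : ∀ t, HasDerivAt k (k1 t) t) (hk1 : Continuous k1)
    (hkδ : ∀ t, 0 < 1 - δ * k t)
    (hNper : Function.Periodic N L) (hkper : Function.Periodic k L)
    (hv : ∀ t, deriv v t = (1 - δ * k t) • (Complex.I * N t))
    (hwC : Differentiable ℝ w) (hwper : Function.Periodic w L)
    (hw : ∀ t,
      deriv w t
        + (k t * ipr (Complex.I * N t) (w t)) • N t
        + ((δ * k1 t / (1 - δ * k t))
            * ipr (Complex.I * N t) (w t)) • (Complex.I * N t)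
        - ((1/δ) * ipr (N t) (w t)) • (Complex.I * N t)
      = (-(δ/2) * k1 t) • N t
        + ((1/2) * (1 - δ * k t) * k t) • (Complex.I * N t))
    (horth : ∫ t in (0:ℝ)..L,
        (ipr (w t) (deriv v t) + ipr (deriv w t) (deriv (deriv v) t)) = 0) :
    ∀ t, w t = (-(δ/2) * k t) • N t := by
  have hIN : ∀ t, HasDerivAt (fun s => Complex.I * N s)
      (Complex.I * ((k t : ℂ) * (Complex.I * N t))) t := fun t => (hN t).const_mul _
  have hwd : ∀ t, HasDerivAt w (deriv w t) t := fun t => (hwC t).hasDerivAt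
  obtain ⟨a, ha⟩ : ∃ a : ℝ → ℝ, a = fun t => ipr (N t) (w t) := ⟨_, rfl⟩
  obtain ⟨b, hb⟩ : ∃ b : ℝ → ℝ, b = fun t => ipr (Complex.I * N t) (w t) := ⟨_, rfl⟩
  have ha' : ∀ t, ipr (N t) (w t) = a t := fun t => by rw [ha]
  have hb' : ∀ t, ipr (Complex.I * N t) (w t) = b t := fun t => by rw [hb]
  -- the two components of the equation for `w`
  have e1 : ∀ t, ipr (N t) (deriv w t) = -(δ/2) * k1 t - k t * b t := by
    intro t
    have h := hw t
    rw [ha' t, hb' t] at h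
    have hr := congrArg Complex.re h
    have hi := congrArg Complex.im h
    simp only [Complex.add_re, Complex.sub_re, Complex.add_im, Complex.sub_im, Complex.real_smul,
      Complex.mul_re, Complex.mul_im, Complex.ofReal_re, Complex.ofReal_im, Complex.I_re,
      Complex.I_im] at hr hi
    simp only [ipr]
    linear_combination (N t).re * hr + (N t).im * hi
      + (-(δ/2) * k1 t - k t * b t) * hN1 t
  have e2 : ∀ t, ipr (Complex.I * N t) (deriv w t)
      = (1/2) * (1 - δ * k t) * k t - δ * k1 t / (1 - δ * k t) * b t + (1/δ) * a t := by
    intro t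
    have h := hw t
    rw [ha' t, hb' t] at h
    have hr := congrArg Complex.re h
    have hi := congrArg Complex.im h
    simp only [Complex.add_re, Complex.sub_re, Complex.add_im, Complex.sub_im, Complex.real_smul,
      Complex.mul_re, Complex.mul_im, Complex.ofReal_re, Complex.ofReal_im, Complex.I_re,
      Complex.I_im] at hr hi
    simp only [ipr, Complex.mul_re, Complex.mul_im, Complex.I_re, Complex.I_im]
    linear_combination -(N t).im * hr + (N t).re * hi
      + ((1/2) * (1 - δ * k t) * k t - δ * k1 t / (1 - δ * k t) * b t + (1/δ) * a t) * hN1 t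
  have da : ∀ t, HasDerivAt a (-(δ/2) * k1 t) t := by
    intro t
    have h := ipr_hasDerivAt (hN t) (hwd t)
    rw [e1 t] at h
    rw [ha]
    refine h.congr_deriv ?_
    rw [← hb' t]
    simp [ipr]
    ring
  have db : ∀ t, HasDerivAt b (-k t * a t + ((1/2) * (1 - δ * k t) * k t
      - δ * k1 t / (1 - δ * k t) * b t + (1/δ) * a t)) t := by
    intro t
    have h := ipr_hasDerivAt (hIN t) (hwd t)
    rw [e2 t] at h
    have h2 : ipr (Complex.I * ((k t : ℂ) * (Complex.I * N t))) (w t) = -k t * a t := by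
      rw [← ha' t]
      simp [ipr]
      ring
    rw [h2] at h
    rw [hb]
    rw [hb] at h
    exact h
  -- `a + (δ/2) k` is a constant `c`
  have dc : ∀ t, HasDerivAt (fun s => a s + (δ/2) * k s) 0 t := fun t =>
    ((da t).add ((hk t).const_mul (δ/2))).congr_deriv (by ring)
  obtain ⟨c, hc⟩ : ∃ c, ∀ t, a t + (δ/2) * k t = c :=
    ⟨a 0 + (δ/2) * k 0, fun t => is_const_of_deriv_eq_zero
      (fun s => (dc s).differentiableAt) (fun s => (dc s).deriv) t 0⟩
  have dβ : ∀ t, HasDerivAt (fun s => b s / (1 - δ * k s) - (c / δ) * s) 0 t := by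
    intro t
    have hne := (hkδ t).ne'
    have h := ((db t).div (((hk t).const_mul δ).const_sub 1) hne).sub
      ((hasDerivAt_id t).const_mul (c / δ))
    refine h.congr_deriv ?_
    have : a t = c - (δ/2) * k t := by linarith [hc t]
    rw [this]
    generalize hm : 1 - δ * k t = m at hne ⊢
    field_simp
    rw [← hm]
    ring
  obtain ⟨β, hβ⟩ : ∃ β, ∀ t, b t / (1 - δ * k t) - (c / δ) * t = β :=
    ⟨_, fun t => is_const_of_deriv_eq_zero
      (fun s => (dβ s).differentiableAt) (fun s => (dβ s).deriv) t 0⟩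
  have hbper : b L = b 0 := by
    rw [← hb', ← hb', hNper.eq, hwper.eq]
  have hc0 : c = 0 := by
    have h1 := hβ L
    have h0 := hβ 0
    rw [hbper, hkper.eq] at h1
    have : c / δ * L = 0 := by linarith
    rcases mul_eq_zero.mp this with h | h
    · exact (div_eq_zero_iff.mp h).resolve_right hδ.ne'
    · exact absurd h hL.ne'
  have hat : ∀ t, a t = -(δ/2) * k t := fun t => by linarith [hc t]
  have hbt : ∀ t, b t = (1 - δ * k t) * β := by
    intro t
    have h := hβ t
    have hne := (hkδ t).ne'
    rw [hc0, zero_div, zero_mul, sub_zero] at h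
    rw [← h]
    field_simp
  have hwt : ∀ t, w t = a t • N t + b t • (Complex.I * N t) := by
    intro t
    rw [← ha' t, ← hb' t]
    apply Complex.ext
    · simp [ipr]
      linear_combination -(w t).re * hN1 t
    · simp [ipr]
      linear_combination -(w t).im * hN1 t
  have dv : ∀ t, deriv (deriv v) t
      = (-(δ * k1 t)) • (Complex.I * N t) + (-((1 - δ * k t) * k t)) • N t := by
    intro t
    have h : HasDerivAt (fun s => (1 - δ * k s) • (Complex.I * N s)) _ t :=
      (((hk t).const_mul δ).const_sub 1).smul (hIN t)
    rw [funext hv, h.deriv]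
    apply Complex.ext <;> simp <;> ring
  have hint : ∀ t, ipr (w t) (deriv v t) + ipr (deriv w t) (deriv (deriv v) t)
      = (δ/2) * (k t * k1 t) + β * ((1 - δ * k t) ^ 2 + ((δ * k1 t) ^ 2
          + ((1 - δ * k t) * k t) ^ 2)) := by
    intro t
    have hne := (hkδ t).ne'
    have h1 : ipr (w t) (deriv v t) = (1 - δ * k t) * b t := by
      rw [hv t, ← hb' t]
      simp [ipr]
      ring
    have h2 : ipr (deriv w t) (deriv (deriv v) t)
        = -(δ * k1 t) * ipr (Complex.I * N t) (deriv w t)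
          - (1 - δ * k t) * k t * ipr (N t) (deriv w t) := by
      rw [dv t]
      simp [ipr]
      ring
    rw [h1, h2, e1, e2, hat, hbt]
    field_simp
    ring
  have hkc : Continuous k := continuous_iff_continuousAt.mpr fun t => (hk t).continuousAt
  have hP : Continuous fun t => (1 - δ * k t) ^ 2 + ((δ * k1 t) ^ 2
          + ((1 - δ * k t) * k t) ^ 2) := by fun_prop
  have hQ : Continuous fun t => (δ/2) * (k t * k1 t) := by fun_prop
  have hQ0 : ∫ t in (0:ℝ)..L, (δ/2) * (k t * k1 t) = 0 := by
    have h : ∀ t ∈ Set.uIcc 0 L, HasDerivAt (fun s => (δ/4) * (k s) ^ 2)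
        ((δ/2) * (k t * k1 t)) t := fun t _ =>
      (((hk t).pow 2).const_mul (δ/4)).congr_deriv (by push_cast; ring)
    rw [intervalIntegral.integral_eq_sub_of_hasDerivAt h (hQ.intervalIntegrable _ _),
      hkper.eq, sub_self]
  have hPpos : 0 < ∫ t in (0:ℝ)..L, ((1 - δ * k t) ^ 2 + ((δ * k1 t) ^ 2
          + ((1 - δ * k t) * k t) ^ 2)) :=
    intervalIntegral.intervalIntegral_pos_of_pos (hP.intervalIntegrable _ _)
      (fun t => by have := hkδ t; positivity) hL
  have hβ0 : β = 0 := by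
    rw [intervalIntegral.integral_congr (fun t _ => hint t),
      intervalIntegral.integral_add (hQ.intervalIntegrable _ _)
        ((hP.const_mul β).intervalIntegrable _ _), hQ0, zero_add,
      intervalIntegral.integral_const_mul] at horth
    exact (mul_eq_zero.mp horth).resolve_right hPpos.ne'
  intro t
  rw [hwt t, hbt t, hat t, hβ0]
  simp

/-! ### The projected curve -/

/-- Injectivity on one period: two parameters with the same image cannot differ by an amount
strictly between `0` and `L`. -/
lemma periodic_inj {L : ℝ} (hL : 0 < L) {γ : ℝ → ℂ} (hγper : Function.Periodic γ L)
    (hγinj : Set.InjOn γ (Set.Ico 0 L)) {s s' : ℝ} (h : γ s = γ s')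
    (h1 : s' < s) (h2 : s < s' + L) : False := by
  have e : ∀ x, γ (toIcoMod hL 0 x) = γ x := fun x => by
    rw [toIcoMod]; exact hγper.sub_zsmul_eq _
  have m : ∀ x, toIcoMod hL 0 x ∈ Set.Ico 0 L := fun x => by
    simpa using toIcoMod_mem_Ico hL 0 x
  have h3 := hγinj (m s) (m s') (by rw [e, e, h])
  rw [toIcoMod, toIcoMod] at h3
  have h4 : s - s' = ((toIcoDiv hL 0 s - toIcoDiv hL 0 s' : ℤ) : ℝ) * L := by
    push_cast
    simp only [zsmul_eq_mul] at h3
    linarith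
  generalize toIcoDiv hL 0 s - toIcoDiv hL 0 s' = n at h4
  have a1 : (0 : ℝ) < n := by
    by_contra hn
    nlinarith
  have a2 : (n : ℝ) < 1 := by
    by_contra hn
    nlinarith
  have b1 : 0 < n := by exact_mod_cast a1
  have b2 : n < 1 := by exact_mod_cast a2
  omega

/-- A nearest-point parameter can be chosen close to a given one: if `γ s₀` is the unique point of
the curve at distance `δ` from `v t₀`, then for `t` near `t₀` any point of the curve at distance
`δ` from `v t` has a parameter near `s₀`. -/
lemma local_parameter {L : ℝ} (hL : 0 < L) {γ : ℝ → ℂ} (hγc : Continuous γ)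
    (hγper : Function.Periodic γ L) (hγinj : Set.InjOn γ (Set.Ico 0 L))
    {δ : ℝ} {v : ℝ → ℂ} (hvc : Continuous v) {t₀ s₀ : ℝ}
    (hge : ∀ s, δ ≤ dist (v t₀) (γ s))
    (huniq : ∀ s, dist (v t₀) (γ s) = δ → γ s = γ s₀)
    {U : Set ℝ} (hU : U ∈ nhds s₀) :
    ∀ᶠ t in nhds t₀, ∀ s, dist (v t) (γ s) = δ → ∃ s' ∈ U, γ s' = γ s := by
  obtain ⟨ε₀, hε₀, hball⟩ := Metric.mem_nhds_iff.mp hU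
  obtain ⟨ε, hε, hεε₀, hεL⟩ : ∃ ε, 0 < ε ∧ ε < ε₀ ∧ ε < L / 2 :=
    ⟨min ε₀ (L / 2) / 2, by positivity,
      by have := min_le_left ε₀ (L/2); have : 0 < min ε₀ (L/2) := by positivity
         linarith,
      by have := min_le_right ε₀ (L/2); have : 0 < min ε₀ (L/2) := by positivity
         linarith⟩
  -- the part of the curve away from `γ s₀`
  have hK : IsCompact (γ '' Set.Icc (s₀ + ε) (s₀ - ε + L)) := isCompact_Icc.image hγc
  have hKne : (γ '' Set.Icc (s₀ + ε) (s₀ - ε + L)).Nonempty :=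
    (Set.nonempty_Icc.mpr (by linarith)).image _
  have hlt : δ < Metric.infDist (v t₀) (γ '' Set.Icc (s₀ + ε) (s₀ - ε + L)) := by
    obtain ⟨y, ⟨s, hs, rfl⟩, hy⟩ := hK.exists_infDist_eq_dist hKne (v t₀)
    rw [hy]
    refine lt_of_le_of_ne (hge s) fun h => ?_
    exact periodic_inj hL hγper hγinj (huniq s h.symm) (by linarith [hs.1]) (by linarith [hs.2])
  have hcont : Continuous fun t =>
      Metric.infDist (v t) (γ '' Set.Icc (s₀ + ε) (s₀ - ε + L)) :=
    (Metric.continuous_infDist_pt _).comp hvc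
  filter_upwards [hcont.continuousAt.eventually (lt_mem_nhds hlt)] with t ht s hs
  have e : γ (toIcoMod hL (s₀ - ε) s) = γ s := by
    rw [toIcoMod]; exact hγper.sub_zsmul_eq _
  have m := toIcoMod_mem_Ico hL (s₀ - ε) s
  refine ⟨_, hball ?_, e⟩
  rw [Metric.mem_ball, Real.dist_eq, abs_lt]
  refine ⟨by linarith [m.1], ?_⟩
  by_contra hcon
  have hmem : γ s ∈ γ '' Set.Icc (s₀ + ε) (s₀ - ε + L) :=
    ⟨_, ⟨by linarith, m.2.le⟩, e⟩
  have := Metric.infDist_le_dist_of_mem (x := v t) hmem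
  linarith

/-- If near `t₀` the curve `v` runs along the regular `C¹` curve `F`, at parameters close to `s₀` and
with velocity equal to `F'` there, then `v` is locally a time translate of `F`. The parameter is
recovered from `v` by inverting a real coordinate of `F`, so it is differentiable in `t`. -/
lemma local_translate {F : ℝ → ℂ} (hF : ContDiff ℝ 1 F) {v : ℝ → ℂ} (hv : ContDiff ℝ 1 v)
    {t₀ s₀ : ℝ} (hF0 : deriv F s₀ ≠ 0) (h0 : v t₀ = F s₀)
    (hpos : ∀ U ∈ nhds s₀, ∀ᶠ t in nhds t₀, ∃ s ∈ U, v t = F s ∧ deriv v t = deriv F s)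
    (hne : ∀ s, deriv F s ≠ 0) :
    ∀ᶠ t in nhds t₀, v t = F (t + (s₀ - t₀)) := by
  -- the coordinate along the tangent direction at `s₀`
  obtain ⟨A, hA⟩ : ∃ A : ℂ →L[ℝ] ℝ, A (deriv F s₀) ≠ 0 := by
    by_cases h : (deriv F s₀).re = 0
    · exact ⟨Complex.imCLM, fun h' => hF0 (Complex.ext h h')⟩
    · exact ⟨Complex.reCLM, h⟩
  have hg : ContDiff ℝ 1 (fun s => A (F s)) := A.contDiff.comp hF
  have hgd : HasDerivAt (fun s => A (F s)) (A (deriv F s₀)) s₀ :=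
    A.hasFDerivAt.comp_hasDerivAt s₀ (hF.differentiable one_ne_zero s₀).hasDerivAt
  let e : ℝ ≃L[ℝ] ℝ := ContinuousLinearEquiv.unitsEquivAut ℝ (Units.mk0 _ hA)
  have hge : HasFDerivAt (fun s => A (F s)) (e : ℝ →L[ℝ] ℝ) s₀ := by
    refine hgd.hasFDerivAt.congr_fderiv ?_
    ext
    simp [e]
  have hgs := hg.contDiffAt.hasStrictFDerivAt' hge one_ne_zero
  obtain ⟨G, hGleft, hGC⟩ : ∃ G : ℝ → ℝ, (∀ᶠ s in nhds s₀, G (A (F s)) = s) ∧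
      ContDiffAt ℝ 1 G (A (F s₀)) :=
    ⟨_, hgs.eventually_left_inverse, hg.contDiffAt.to_localInverse hge one_ne_zero⟩
  have hτC : ContDiffAt ℝ 1 (fun t => G (A (v t))) t₀ := by
    have h1 : ContDiffAt ℝ 1 (fun t => A (v t)) t₀ := (A.contDiff.comp hv).contDiffAt
    rw [← h0] at hGC
    exact ContDiffAt.comp t₀ hGC h1
  have hev : ∀ᶠ t in nhds t₀, v t = F (G (A (v t))) ∧ deriv v t = deriv F (G (A (v t))) := by
    filter_upwards [hpos _ hGleft] with t ⟨s, hs, h1, h2⟩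
    have : G (A (v t)) = s := by rw [h1]; exact hs
    rw [this]; exact ⟨h1, h2⟩
  have hdiff : ∀ᶠ t in nhds t₀, DifferentiableAt ℝ (fun t => G (A (v t))) t := by
    filter_upwards [hτC.eventually (by simp)] with t ht
    exact ht.differentiableAt one_ne_zero
  have hone : ∀ᶠ t in nhds t₀, HasDerivAt (fun t => G (A (v t)) - t) 0 t := by
    filter_upwards [hev.eventually_nhds, hdiff] with t h1 h2
    have h3 := (hF.differentiable one_ne_zero (G (A (v t)))).hasDerivAt.scomp t h2.hasDerivAt
    have h4 : HasDerivAt v (deriv F (G (A (v t)))) t := by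
      rw [← h1.self_of_nhds.2]
      exact (hv.differentiable one_ne_zero t).hasDerivAt
    have h5 := (h3.congr_of_eventuallyEq (h1.mono fun _ h => h.1)).unique h4
    have h6 : deriv (fun t => G (A (v t))) t = 1 := by
      by_contra hcon
      have : (deriv (fun t => G (A (v t))) t - 1) • deriv F (G (A (v t))) = 0 := by
        rw [sub_smul, h5, one_smul, sub_self]
      rcases smul_eq_zero.mp this with h | h
      · exact hcon (sub_eq_zero.mp h)
      · exact hne _ h
    have h7 := h2.hasDerivAt.sub (hasDerivAt_id t)
    rw [h6, sub_self] at h7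
    exact h7
  obtain ⟨r, hr, hball⟩ := Metric.eventually_nhds_iff_ball.mp hone
  filter_upwards [Metric.ball_mem_nhds t₀ hr, hev] with t ht h1
  have h2 := Metric.isOpen_ball.is_const_of_deriv_eq_zero
    (convex_ball t₀ r).isPreconnected
    (fun x hx => (hball x hx).differentiableAt.differentiableWithinAt)
    (fun x hx => (hball x hx).deriv) ht (Metric.mem_ball_self hr)
  have h3 : G (A (v t₀)) = s₀ := by rw [h0]; exact hGleft.self_of_nhds
  simp only [h3] at h2
  rw [h1.1]
  congr 1
  linarith

/-- The projected curve is a translate of `γ`. Here `N` is the unit normal along `γ`, and `q t`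
is the unique nearest point of the curve to `v t`. -/
lemma projection_eq_translate {L : ℝ} (hL : 0 < L) {γ : ℝ → ℂ} (hγc : Continuous γ)
    (hγper : Function.Periodic γ L) (hγinj : Set.InjOn γ (Set.Ico 0 L))
    {δ : ℝ} (hδ : 0 < δ) {N : ℝ → ℂ} (hN1 : ∀ s, ‖N s‖ = 1)
    (hF : ContDiff ℝ 1 (fun s => γ s - δ • N s))
    (hne : ∀ s, deriv (fun s => γ s - δ • N s) s ≠ 0)
    {v : ℝ → ℂ} (hv : ContDiff ℝ 1 v) {q : ℝ → ℂ}
    (hge : ∀ t s, δ ≤ dist (v t) (γ s))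
    (hq : ∀ t s, dist (v t) (γ s) = δ → γ s = q t)
    (hqr : ∀ t, ∃ s, γ s = q t)
    (hq' : ∀ t s, γ s = q t → v t = γ s - δ • N s ∧
      deriv v t = deriv (fun s => γ s - δ • N s) s) :
    ∃ c, ∀ t, q t = γ (t + c) := by
  obtain ⟨c, hc⟩ := hqr 0
  have hdist : ∀ t s, v t = γ s - δ • N s → dist (v t) (γ s) = δ := by
    intro t s h
    rw [h, dist_eq_norm, sub_sub_cancel_left, norm_neg, norm_smul, hN1, Real.norm_eq_abs,
      abs_of_pos hδ, mul_one]
  have hclosed : IsClosed {t | v t = γ (t + c) - δ • N (t + c)} :=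
    isClosed_eq hv.continuous (hF.continuous.comp (continuous_id.add continuous_const))
  have hopen : IsOpen {t | v t = γ (t + c) - δ • N (t + c)} := by
    rw [isOpen_iff_mem_nhds]
    intro t₀ h0
    have h := local_translate (t₀ := t₀) (s₀ := t₀ + c) hF hv (hne _) h0 ?_ hne
    · rw [add_sub_cancel_left] at h
      exact h
    · intro U hU
      have hq0 := hq _ _ (hdist _ _ h0)
      filter_upwards [local_parameter hL hγc hγper hγinj hv.continuous (hge t₀)
        (fun s hs => (hq _ _ hs).trans hq0.symm) hU] with t ht
      obtain ⟨s, hs⟩ := hqr t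
      obtain ⟨s', hs'U, hs'⟩ := ht s (hdist _ _ (hq' t s hs).1)
      exact ⟨s', hs'U, hq' t s' (hs'.trans hs)⟩
  have huniv := IsClopen.eq_univ ⟨hclosed, hopen⟩ ⟨0, (hq' 0 (0 + c) (by rw [zero_add, hc])).1⟩
  refine ⟨c, fun t => (hq _ _ (hdist t (t + c) ?_)).symm⟩
  have : t ∈ {t | v t = γ (t + c) - δ • N (t + c)} := huniv ▸ Set.mem_univ t
  exact this

/-! ### The geometric statement -/

/-- Derivative of the solution branch at `r = 0`: the unique C¹
`L`-periodic solution `w` of the inhomogeneous linearized equation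
`w' + κ·ν⟨iν,w⟩ + (δκ'/(1-δκ))·iν⟨iν,w⟩ - (1/δ)·iν⟨ν,w⟩
  = -(δ/2)κ'·ν + (1/2)(1-δκ)κ·iν`
(coefficients evaluated at `p(v(t))`) satisfying the `H¹`-orthogonality
`∫₀^L (⟨w,v'⟩ + ⟨w',v''⟩) dt = 0` is `w = -(δ/2)·κ(p(v))·ν(p(v))`. -/
theorem derivative_of_solution_branch
    (L : ℝ) (hL : 0 < L) (γ : ℝ → ℂ)
    (hγC : ContDiff ℝ 3 γ) (hγper : Function.Periodic γ L)
    (hγunit : ∀ t, ‖deriv γ t‖ = 1) (hγinj : Set.InjOn γ (Set.Ico 0 L))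
    (Γset : Set ℂ) (hΓ : Γset = Set.range γ)
    (ν : ℂ → ℂ) (hν : ∀ t, ν (γ t) = -Complex.I * deriv γ t)
    (κ : ℂ → ℝ) (hκ : ∀ t, deriv (fun s => ν (γ s)) t = (κ (γ t) : ℂ) * deriv γ t)
    (κ' : ℂ → ℝ) (hκ' : ∀ t, deriv (fun s => κ (γ s)) t = κ' (γ t))
    (Ω : Set ℂ) (hΩopen : IsOpen Ω) (hΩconn : IsConnected Ω)
    (hΓfr : Γset ⊆ frontier Ω)
    (hΓcomp : ∀ q ∈ Γset, connectedComponentIn (frontier Ω) q = Γset)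
    (d : ℂ → ℝ) (hd : ∀ z, d z = Metric.infDist z Γset)
    (δ : ℝ) (hδ : 0 < δ) (hκδ : ∀ q ∈ Γset, |κ q| < 1/δ)
    (p : ℂ → ℂ)
    (hp : ∀ z ∈ Ω, d z ≤ δ →
      p z ∈ Γset ∧ dist z (p z) = d z ∧ ∀ q ∈ Γset, dist z q = d z → q = p z)
    (hin : ∀ z ∈ Ω, d z ≤ δ → z = p z - (d z : ℝ) • ν (p z))
    -- the limit solution v at distance δ from Γ
    (v : ℝ → ℂ) (hvC : ContDiff ℝ 1 v) (hvΩ : ∀ t, v t ∈ Ω)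
    (hvper : Function.Periodic v L) (hvd : ∀ t, d (v t) = δ)
    (hvode : ∀ t, deriv v t = (1 - δ * κ (p (v t))) • (Complex.I * ν (p (v t))))
    -- the solution w of the inhomogeneous linearized equation
    (w : ℝ → ℂ) (hwC : ContDiff ℝ 1 w) (hwper : Function.Periodic w L)
    (hw : ∀ t,
      deriv w t
        + (κ (p (v t)) * ipr (Complex.I * ν (p (v t))) (w t)) • ν (p (v t))
        + ((δ * κ' (p (v t)) / (1 - δ * κ (p (v t))))
            * ipr (Complex.I * ν (p (v t))) (w t)) • (Complex.I * ν (p (v t)))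
        - ((1/δ) * ipr (ν (p (v t))) (w t)) • (Complex.I * ν (p (v t)))
      = (-(δ/2) * κ' (p (v t))) • ν (p (v t))
        + ((1/2) * (1 - δ * κ (p (v t))) * κ (p (v t))) • (Complex.I * ν (p (v t))))
    -- the orthogonality condition ⟨w, v'⟩_{H¹} = 0 (v is automatically C²)
    (horth : ∫ t in (0:ℝ)..L,
        (ipr (w t) (deriv v t) + ipr (deriv w t) (deriv (deriv v) t)) = 0) :
    ∀ t, w t = (-(δ/2) * κ (p (v t))) • ν (p (v t)) := by
  have hγ1C : ContDiff ℝ 2 (deriv γ) := by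
    have h : ContDiff ℝ (2 + 1) γ := by norm_num; exact hγC
    exact (contDiff_succ_iff_deriv.mp h).2.2
  have hNeq : (fun s => ν (γ s)) = fun s => -Complex.I * deriv γ s := funext hν
  have hNC : ContDiff ℝ 2 (fun s => ν (γ s)) := by
    rw [hNeq]; exact contDiff_const.mul hγ1C
  have hNC' : ContDiff ℝ 1 (deriv fun s => ν (γ s)) := by
    have h : ContDiff ℝ (1 + 1) (fun s => ν (γ s)) := by norm_num; exact hNC
    exact (contDiff_succ_iff_deriv.mp h).2.2
  have hIN : ∀ t, Complex.I * ν (γ t) = deriv γ t := by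
    intro t
    rw [hν, ← mul_assoc, mul_neg, Complex.I_mul_I, neg_neg, one_mul]
  have hN : ∀ t, HasDerivAt (fun s => ν (γ s)) ((κ (γ t) : ℂ) * deriv γ t) t := by
    intro t
    rw [← hκ t]
    exact (hNC.differentiable two_ne_zero t).hasDerivAt
  have hsq : ∀ z : ℂ, ‖z‖ = 1 → z.re ^ 2 + z.im ^ 2 = 1 := by
    intro z hz
    have h := Complex.sq_norm z
    rw [hz, Complex.normSq_apply] at h
    linarith
  have hN1 : ∀ t, ‖ν (γ t)‖ = 1 := fun t => by rw [hν]; simp [hγunit]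
  -- the curvature is the tangential component of the derivative of the normal, hence `C¹`
  have hkeq : (fun s => κ (γ s)) = fun s =>
      (deriv (fun s => ν (γ s)) s).re * (deriv γ s).re
        + (deriv (fun s => ν (γ s)) s).im * (deriv γ s).im := by
    funext t
    rw [hκ t]
    simp only [Complex.mul_re, Complex.mul_im, Complex.ofReal_re, Complex.ofReal_im]
    linear_combination -(κ (γ t)) * hsq _ (hγunit t)
  have hkC : ContDiff ℝ 1 (fun s => κ (γ s)) := by
    have hγ1C' : ContDiff ℝ 1 (deriv γ) := hγ1C.of_le (by norm_num)
    rw [hkeq]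
    exact ((Complex.reCLM.contDiff.comp hNC').mul (Complex.reCLM.contDiff.comp hγ1C')).add
      ((Complex.imCLM.contDiff.comp hNC').mul (Complex.imCLM.contDiff.comp hγ1C'))
  have hk : ∀ t, HasDerivAt (fun s => κ (γ s)) (κ' (γ t)) t := fun t => by
    rw [← hκ' t]
    exact (hkC.differentiable one_ne_zero t).hasDerivAt
  have hk1 : Continuous fun t => κ' (γ t) := by
    rw [← funext hκ']
    exact hkC.continuous_deriv le_rfl
  have hmem : ∀ s, γ s ∈ Γset := fun s => by rw [hΓ]; exact ⟨s, rfl⟩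
  have hkδ : ∀ s, 0 < 1 - δ * κ (γ s) := by
    intro s
    have h := (abs_lt.mp (hκδ _ (hmem s))).2
    rw [lt_div_iff₀ hδ] at h
    linarith
  have hFd : ∀ s, HasDerivAt (fun s => γ s - δ • ν (γ s))
      ((1 - δ * κ (γ s)) • deriv γ s) s := by
    intro s
    have h := ((hγC.differentiable three_ne_zero s).hasDerivAt).sub ((hN s).const_smul δ)
    refine h.congr_deriv ?_
    simp only [Complex.real_smul]
    push_cast
    ring
  have hFC : ContDiff ℝ 1 (fun s => γ s - δ • ν (γ s)) :=
    (hγC.of_le (by norm_num)).sub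
      ((hNC.of_le (one_le_two : (1 : WithTop ℕ∞) ≤ 2)).const_smul δ)
  have hγ1ne : ∀ s, deriv γ s ≠ 0 := fun s h => by
    have := hγunit s
    rw [h, norm_zero] at this
    exact zero_ne_one this
  have hpv := fun t => hp (v t) (hvΩ t) (hvd t).le
  obtain ⟨c, hc⟩ := projection_eq_translate hL hγC.continuous hγper hγinj hδ hN1 hFC
    (fun s => by rw [(hFd s).deriv]; exact smul_ne_zero (hkδ s).ne' (hγ1ne s))
    hvC (q := fun t => p (v t))
    (fun t s => by
      rw [← hvd t, hd]
      exact Metric.infDist_le_dist_of_mem (hmem s))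
    (fun t s h => (hpv t).2.2 _ (hmem s) (h.trans (hvd t).symm))
    (fun t => by
      have h := (hpv t).1
      rw [hΓ] at h
      exact h)
    (fun t s h => by
      constructor
      · have h1 := hin (v t) (hvΩ t) (hvd t).le
        rw [hvd t, ← h] at h1
        exact h1
      · rw [(hFd s).deriv, hvode t, ← h, hIN])
  simp only [hc] at hvode hw ⊢
  have hper : ∀ t, γ (t + L + c) = γ (t + c) := fun t => by
    rw [add_right_comm]; exact hγper _
  exact linear_solution_eq L hL δ hδ (fun t => ν (γ (t + c))) (fun t => κ (γ (t + c)))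
    (fun t => κ' (γ (t + c))) v w (fun t => hsq _ (hN1 _))
    (fun t => by
      rw [hIN]
      exact (hN (t + c)).comp_add_const t c)
    (fun t => (hk (t + c)).comp_add_const t c)
    (hk1.comp (continuous_id.add continuous_const)) (fun t => hkδ _)
    (fun t => by simp only [hper]) (fun t => by simp only [hper])
    hvode (hwC.differentiable one_ne_zero) hwper hw horth
end

section
/- Asymptotics of the rotating polygon near the boundary: let N ≥ 1 be an integer and for s ∈ (0,1) define ω(s) = (1/(πs²))·(N/(1 - s^{2N}) - (N+1)/2) and r(s) = s²(1 - s^{2N})/(N - 1 + (N+1)s^{2N}). Then ω(s) = 1/(2π·r(s)) for all s ∈ (0,1), and ((1-s) - r(s) - (1/2)r(s)²)/r(s)² → 0 as s → 1⁻. -/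
/-!
The identity for `ω` is algebra: `N/(1-q) - (N+1)/2 = (N-1+(N+1)q)/(2(1-q))` with `q = s^(2N)`.

For the limit put `t = 1 - s`. The second-order expansion `s^(2N) = 1 - 2N t + t² Q(s)`, with `Q`
continuous and `Q(1) = N(2N-1)`, gives `1 - s^(2N) = t A` with `A = 2N - t Q`, hence `r = t s² A / D`
with `D = 2N - (N+1) t A`. Moreover `D - s² A = t B` with `B = Q - (N-1) A - t A`. Cancelling
`t²` turns the quotient into `(D B - s⁴A²/2) / (s⁴A²)`, which is continuous at `s = 1`. There
`A = D = 2N` and `B = N`, so its value is `(2N² - 2N²)/(4N²) = 0`.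
-/

/-- Second-order Taylor expansion of `s^n` at `1`, with an exact continuous remainder factor. -/
lemma exists_pow_second_order (n : ℕ) :
    ∃ Q : ℝ → ℝ, Continuous Q ∧ Q 1 = (n : ℝ) * (n - 1) / 2 ∧
      ∀ s : ℝ, s ^ n = 1 - n * (1 - s) + (1 - s) ^ 2 * Q s := by
  induction n with
  | zero => exact ⟨fun _ => 0, continuous_const, by simp, by simp⟩
  | succ n ih =>
    obtain ⟨Q, hQ, h1, h⟩ := ih
    refine ⟨fun s => n + s * Q s, by fun_prop, ?_, fun s => ?_⟩
    · simp only [h1]; push_cast; ring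
    · rw [pow_succ, h s]; push_cast; ring

/-- Asymptotics of the rotating polygon near the boundary:
`ω(s) = 1/(2π·r(s))` on `(0,1)`, and `((1-s) - r(s) - (1/2)r(s)²)/r(s)² → 0`
as `s → 1⁻`. -/
theorem rotating_polygon_boundary_asymptotics
    (N : ℕ) (hN : 1 ≤ N)
    (ω r : ℝ → ℝ)
    (hω : ∀ s : ℝ, ω s = (1/(Real.pi * s^2)) * ((N : ℝ)/(1 - s^(2*N)) - ((N : ℝ) + 1)/2))
    (hr : ∀ s : ℝ, r s = s^2 * (1 - s^(2*N)) / ((N : ℝ) - 1 + ((N : ℝ) + 1) * s^(2*N))) :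
    (∀ s ∈ Set.Ioo (0:ℝ) 1, ω s = 1/(2 * Real.pi * r s)) ∧
    Filter.Tendsto (fun s => ((1 - s) - r s - (1/2) * (r s)^2) / (r s)^2)
      (nhdsWithin 1 (Set.Iio 1)) (nhds 0) := by
  have hN' : (1 : ℝ) ≤ N := by exact_mod_cast hN
  have hpos : ∀ s ∈ Set.Ioo (0:ℝ) 1,
      0 < 1 - s^(2*N) ∧ 0 < (N : ℝ) - 1 + ((N : ℝ) + 1) * s^(2*N) := by
    rintro s ⟨h0, h1⟩
    have hq1 : s^(2*N) < 1 := pow_lt_one₀ h0.le h1 (by omega)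
    have hq0 : 0 < ((N : ℝ) + 1) * s^(2*N) := by positivity
    exact ⟨by linarith, by linarith⟩
  refine ⟨fun s hs => ?_, ?_⟩
  · obtain ⟨hq, hD⟩ := hpos s hs
    have hs0 : s ≠ 0 := hs.1.ne'
    have hpi := Real.pi_ne_zero
    rw [hω, hr]
    generalize s^(2*N) = q at hq hD ⊢
    have hq' := hq.ne'
    have hD' := hD.ne'
    field_simp
    ring
  · obtain ⟨Q, hQ, hQ1, hQs⟩ := exists_pow_second_order (2*N)
    push_cast at hQ1 hQs
    let A : ℝ → ℝ := fun s => 2*N - (1-s) * Q s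
    let D : ℝ → ℝ := fun s => 2*N - (N+1) * (1-s) * A s
    let B : ℝ → ℝ := fun s => Q s - (N-1) * A s - (1-s) * A s
    let F : ℝ → ℝ := fun s => (D s * B s - s^4 * (A s)^2 / 2) / (s^4 * (A s)^2)
    have hA : Continuous A := by fun_prop
    have hD : Continuous D := by fun_prop
    have hB : Continuous B := by fun_prop
    have hA1 : A 1 = 2*N := by simp [A]
    have hD1 : D 1 = 2*N := by simp [D]
    have hB1 : B 1 = N := by simp only [B, hA1, hQ1]; ring
    have hF1 : F 1 = 0 := by simp only [F, hA1, hD1, hB1]; ring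
    have hF : ContinuousAt F 1 := by
      refine ContinuousAt.div (by fun_prop) (by fun_prop) ?_
      rw [hA1]; positivity
    have hlim : Filter.Tendsto F (nhdsWithin 1 (Set.Iio 1)) (nhds 0) := by
      rw [← hF1]; exact hF.tendsto.mono_left nhdsWithin_le_nhds
    refine hlim.congr' ?_
    filter_upwards [Ioo_mem_nhdsLT (zero_lt_one' ℝ)] with s hs
    obtain ⟨hq, hDp⟩ := hpos s hs
    have hs0 : s ≠ 0 := hs.1.ne'
    have ht : 1 - s ≠ 0 := by linarith [hs.2]
    have e1 : 1 - s^(2*N) = (1-s) * A s := by rw [hQs]; simp only [A]; ring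
    have e2 : (N : ℝ) - 1 + ((N : ℝ) + 1) * s^(2*N) = D s := by
      simp only [D, mul_assoc]; rw [← e1]; ring
    have e3 : (1-s) * B s = D s - s^2 * A s := by simp only [B, D, A]; ring
    rw [e1] at hq
    rw [e2] at hDp
    have hA0 : A s ≠ 0 := right_ne_zero_of_mul hq.ne'
    have hD0 : D s ≠ 0 := hDp.ne'
    have hBs : B s = (D s - s^2 * A s) / (1-s) := by rw [← e3]; field_simp
    rw [hr, e1, e2]
    simp only [F]
    rw [hBs]
    generalize A s = a at *
    generalize D s = d at *
    field_simp
end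

section
/- Interior Cauchy estimate for the fourth derivative: let Ω ⊂ ℂ be open with Ω ≠ ℂ, let f : Ω → ℂ be holomorphic, and suppose there are α ∈ (0,1] and M ≥ 0 with |f'''(w) - f'''(z)| ≤ M·|w - z|^α for all w, z ∈ Ω. Then |f''''(z)| ≤ 2^{1-α}·M·dist(z, ∂Ω)^{α-1} for all z ∈ Ω. -/
/-!
Fix `z ∈ Ω` and let `d = dist(z, ∂Ω)`. Since `Ω` is open, nonempty and different from `ℂ`, `d > 0`,
and the ball of radius `d` about `z`, being connected, meeting `Ω` and missing `∂Ω`, lies in `Ω`.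
Cauchy's estimate for the first derivative of `w ↦ f⁽³⁾(w) - f⁽³⁾(z)` on the circle of radius
`d / 2` gives `|f⁽⁴⁾(z)| ≤ M (d / 2)^α / (d / 2)`, which is the claimed bound.
-/

lemma ball_infDist_frontier_subset {Ω : Set ℂ} {z : ℂ} (hz : z ∈ Ω) :
    Metric.ball z (Metric.infDist z (frontier Ω)) ⊆ Ω := by
  intro w hw
  by_contra hwΩ
  set d := Metric.infDist z (frontier Ω)
  have hd : 0 < d := Metric.pos_of_mem_ball hw
  have hmiss : ∀ x ∈ Metric.ball z d, x ∉ frontier Ω := by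
    intro x hx hxf
    rw [Metric.mem_ball, dist_comm] at hx
    exact absurd (Metric.infDist_le_dist_of_mem hxf) (not_le.2 hx)
  -- Off the frontier, every point is interior to `Ω` or interior to its complement.
  have hin : ∀ x ∈ Metric.ball z d, x ∈ Ω → x ∈ interior Ω := fun x hx hxΩ => by
    by_contra h
    exact hmiss x hx ⟨subset_closure hxΩ, h⟩
  have hout : ∀ x ∈ Metric.ball z d, x ∉ Ω → x ∈ interior Ωᶜ := fun x hx hxΩ => by
    by_contra h
    exact hmiss x hx (frontier_compl Ω ▸ ⟨subset_closure hxΩ, h⟩)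
  obtain ⟨x, -, hx₁, hx₂⟩ := (convex_ball z d).isPreconnected (interior Ω) (interior Ωᶜ)
    isOpen_interior isOpen_interior
    (fun x hx => (em (x ∈ Ω)).imp (hin x hx) (hout x hx))
    ⟨z, Metric.mem_ball_self hd, hin z (Metric.mem_ball_self hd) hz⟩ ⟨w, hw, hout w hw hwΩ⟩
  exact interior_subset hx₂ (interior_subset hx₁)

/-- Interior Cauchy estimate for the fourth derivative: if `f` is
holomorphic on an open set `Ω ≠ ℂ` and `f'''` is `α`-Hölder with constant `M` on
`Ω`, then `|f''''(z)| ≤ 2^{1-α}·M·dist(z,∂Ω)^{α-1}` for all `z ∈ Ω`. -/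
theorem interior_cauchy_estimate_fourth_derivative
    (Ω : Set ℂ) (hΩopen : IsOpen Ω) (hΩne : Ω ≠ Set.univ)
    (f : ℂ → ℂ) (hf : DifferentiableOn ℂ f Ω)
    (α M : ℝ) (hα0 : 0 < α) (hα1 : α ≤ 1) (hM : 0 ≤ M)
    (hHolder : ∀ w ∈ Ω, ∀ z ∈ Ω,
      ‖iteratedDeriv 3 f w - iteratedDeriv 3 f z‖ ≤ M * ‖w - z‖ ^ α) :
    ∀ z ∈ Ω, ‖iteratedDeriv 4 f z‖ ≤
      (2:ℝ) ^ (1 - α) * M * Metric.infDist z (frontier Ω) ^ (α - 1) := by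
  intro z hz
  set d := Metric.infDist z (frontier Ω)
  have hd : 0 < d := by
    have hne : (frontier Ω).Nonempty := nonempty_frontier_iff.2 ⟨⟨z, hz⟩, hΩne⟩
    refine (isClosed_frontier.notMem_iff_infDist_pos hne).1 fun h => ?_
    rw [hΩopen.frontier_eq] at h
    exact h.2 hz
  have hr : 0 < d / 2 := half_pos hd
  have hsub : Metric.closedBall z (d / 2) ⊆ Ω :=
    (Metric.closedBall_subset_ball (half_lt_self hd)).trans (ball_infDist_frontier_subset hz)
  have hdiff : DifferentiableOn ℂ (iteratedDeriv 3 f) Ω := by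
    rw [iteratedDeriv_eq_iterate]
    exact ((hf.analyticOnNhd hΩopen).iterated_deriv 3).differentiableOn
  have hcauchy : ‖deriv (fun w => iteratedDeriv 3 f w - iteratedDeriv 3 f z) z‖ ≤
      M * (d / 2) ^ α / (d / 2) := by
    refine Complex.norm_deriv_le_of_forall_mem_sphere_norm_le hr ?_ fun w hw => ?_
    · exact ((hdiff.mono hsub).sub_const _).diffContOnCl_ball subset_rfl
    · have h := hHolder w (hsub (Metric.sphere_subset_closedBall hw)) z hz
      rwa [mem_sphere_iff_norm.1 hw] at h
  rw [deriv_sub_const, ← iteratedDeriv_succ] at hcauchy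
  refine hcauchy.trans_eq ?_
  rw [mul_div_assoc, ← Real.rpow_sub_one hr.ne', Real.div_rpow hd.le zero_le_two,
    ← neg_sub α 1, Real.rpow_neg zero_le_two]
  ring
end
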